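/- arXiv:1603.07718 — 3 statements merged into one kernel-verified Lean document; each statement's English description precedes it below -/
import Mathlib

section
/- Let k be a field and let D₁, D₂ be central division k-algebras of k-dimension 4. Suppose there is a tower of finite separable field extensions k ⊆ K ⊆ K' with [K:k] odd and [K':K] = 2 such that K' splits both D₁ and D₂, i.e., Dᵢ ⊗_k K' is isomorphic as a K'-algebra to the algebra of 2×2 matrices over K' for i = 1, 2. Then there exists a separable field extension F/k of degree 2 such that D₁ ⊗_k F and D₂ ⊗_k F are both isomorphic as F-algebras to the algebra of 2×2 matrices over F. -/
open TensorProduct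

/-!
A central division algebra of dimension four is a quaternion algebra, and a quadratic field splits
it if and only if the field embeds into it. Hence two such algebras have a common quadratic
splitting field as soon as they contain nonscalar elements with the same reduced trace and norm,
and such a pair is the same thing as a nontrivial zero of the Albert form, a quadratic form in six
variables. The embeddings of `K'` provide a zero over `K`, and Springer's theorem descends it to `k`
because a quadratic form which is anisotropic over `k` remains so over every extension of odd
degree. In characteristic two the pair may generate inseparable extensions; one then replaces it by
a pair of elements of reduced trace one.
-/

open Quaternion

section Homogeneous

open Polynomial

variable {ι k : Type*} [CommSemiring k]

theorem aeval_eq_sum_toMultiset {A : Type*} [CommSemiring A] [Algebra k A] (Q : MvPolynomial ι k)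
    (v : ι → A) :
    MvPolynomial.aeval v Q =
      ∑ d ∈ Q.support, algebraMap k A (Q.coeff d) * (d.toMultiset.map v).prod := by
  simp only [MvPolynomial.aeval_def, MvPolynomial.eval₂_eq, Finsupp.toMultiset_apply, Finsupp.sum,
    map_sum, map_nsmul, ← Multiset.coe_mapAddMonoidHom]
  simp [Multiset.prod_sum, Multiset.prod_nsmul]

variable {Q : MvPolynomial ι k} {n : ℕ}

theorem card_toMultiset_of_mem_support (hQ : Q.IsHomogeneous n) {d : ι →₀ ℕ}
    (hd : d ∈ Q.support) : Multiset.card d.toMultiset = n := by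
  rw [Finsupp.card_toMultiset]
  exact (hQ.degree_eq_sum_deg_support hd).symm

theorem aeval_smul_of_isHomogeneous {A : Type*} [CommSemiring A] [Algebra k A]
    (hQ : Q.IsHomogeneous n) (a : A) (v : ι → A) :
    MvPolynomial.aeval (a • v) Q = a ^ n * MvPolynomial.aeval v Q := by
  simp only [aeval_eq_sum_toMultiset, Finset.mul_sum, Pi.smul_def, smul_eq_mul]
  refine Finset.sum_congr rfl fun d hd => ?_
  rw [Multiset.prod_map_mul, Multiset.map_const', Multiset.prod_replicate,
    card_toMultiset_of_mem_support hQ hd, mul_left_comm]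

theorem natDegree_aeval_le_of_isHomogeneous (hQ : Q.IsHomogeneous n) {f : ι → k[X]} {m : ℕ}
    (hf : ∀ i, (f i).natDegree ≤ m) : (MvPolynomial.aeval f Q).natDegree ≤ n * m := by
  rw [aeval_eq_sum_toMultiset]
  refine natDegree_sum_le_of_forall_le _ _ fun d hd => (natDegree_C_mul_le _ _).trans ?_
  refine (natDegree_multiset_prod_le _).trans ?_
  simpa [card_toMultiset_of_mem_support hQ hd] using
    Multiset.sum_le_card_nsmul ((d.toMultiset.map f).map natDegree) m (by simp [hf])

theorem coeff_aeval_of_isHomogeneous (hQ : Q.IsHomogeneous n) {f : ι → k[X]} {m : ℕ}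
    (hf : ∀ i, (f i).natDegree ≤ m) :
    (MvPolynomial.aeval f Q).coeff (n * m) = MvPolynomial.aeval (fun i => (f i).coeff m) Q := by
  simp only [aeval_eq_sum_toMultiset, finsetSum_coeff, Polynomial.algebraMap_eq, coeff_C_mul,
    Algebra.algebraMap_self, RingHom.id_apply]
  refine Finset.sum_congr rfl fun d hd => congrArg _ ?_
  have hprod := coeff_multiset_prod_of_natDegree_le (d.toMultiset.map f) m (by simp [hf])
  rwa [Multiset.card_map, card_toMultiset_of_mem_support hQ hd, Multiset.map_map] at hprod

end Homogeneous

section Springer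

open IntermediateField Polynomial

/-- A quadratic form over `k` is encoded as a homogeneous polynomial `Q` of degree two, so that it
makes sense in characteristic two and can be evaluated in any `k`-algebra. This is the property of
having no nontrivial zero with coordinates in the `k`-algebra `A`. -/
def IsAnisotropicOver {ι k : Type*} [CommSemiring k] (A : Type*) [CommSemiring A] [Algebra k A]
    (Q : MvPolynomial ι k) : Prop :=
  ∀ v : ι → A, MvPolynomial.aeval v Q = 0 → v = 0

variable {ι k : Type*} [Field k]

theorem exists_irreducible_odd_natDegree_dvd (f : k[X]) :
    Odd f.natDegree → ∃ p, Irreducible p ∧ Odd p.natDegree ∧ p ∣ f := by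
  induction f using WfDvdMonoid.induction_on_irreducible with
  | zero => simp
  | unit u hu => simp [natDegree_eq_zero_of_isUnit hu]
  | mul f p hf hp ih =>
    intro hodd
    by_cases hpodd : Odd p.natDegree
    · exact ⟨p, hp, hpodd, dvd_mul_right p f⟩
    rw [natDegree_mul hp.ne_zero hf, Nat.odd_add] at hodd
    obtain ⟨q, hq, hqodd, hqf⟩ := ih (by grind)
    exact ⟨q, hq, hqodd, hqf.mul_left p⟩

theorem exists_natDegree_lt_mk_eq {p : k[X]} (hp : 0 < p.natDegree) (x : AdjoinRoot p) :
    ∃ f : k[X], f.natDegree < p.natDegree ∧ AdjoinRoot.mk p f = x := by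
  obtain ⟨f, rfl⟩ := AdjoinRoot.mk_surjective x
  refine ⟨f % p, natDegree_mod_lt f hp.ne', AdjoinRoot.mk_eq_mk.mpr ?_⟩
  exact (EuclideanDomain.mod_eq_sub_mul_div f p) ▸ ⟨-(f / p), by ring⟩

theorem IsAnisotropicOver.of_injective {A B : Type*} [CommSemiring A] [Algebra k A]
    [CommSemiring B] [Algebra k B] {Q : MvPolynomial ι k} (hQ : IsAnisotropicOver B Q)
    (φ : A →ₐ[k] B) (hφ : Function.Injective φ) : IsAnisotropicOver A Q := fun v hv => by
  have hzero := hQ (fun i => φ (v i)) (by rw [← MvPolynomial.comp_aeval_apply, hv, map_zero])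
  funext i
  exact hφ ((congrFun hzero i).trans (map_zero φ).symm)

theorem isAnisotropicOver_map_iff {Q : MvPolynomial ι k} {L A : Type*} [Field L] [Algebra k L]
    [CommSemiring A] [Algebra k A] [Algebra L A] [IsScalarTower k L A] :
    IsAnisotropicOver A (Q.map (algebraMap k L)) ↔ IsAnisotropicOver A Q := by
  simp only [IsAnisotropicOver, MvPolynomial.aeval_map_algebraMap]

theorem dvd_aeval_iff (Q : MvPolynomial ι k) (p : k[X]) (f : ι → k[X]) :
    p ∣ MvPolynomial.aeval f Q ↔ MvPolynomial.aeval (fun i => AdjoinRoot.mk p (f i)) Q = 0 := by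
  rw [← AdjoinRoot.mk_eq_zero, ← AdjoinRoot.mkₐ_toRingHom, RingHom.coe_coe,
    MvPolynomial.comp_aeval_apply]

variable {Q : MvPolynomial ι k} [Finite ι]

theorem IsAnisotropicOver.exists_degree_aeval_eq (hQ : Q.IsHomogeneous 2)
    (h : IsAnisotropicOver k Q) {f : ι → k[X]} (hf : f ≠ 0) :
    ∃ i, (MvPolynomial.aeval f Q).degree = (2 * (f i).natDegree : ℕ) := by
  obtain ⟨j, hj⟩ := Function.ne_iff.mp hf
  have : Nonempty ι := ⟨j⟩
  obtain ⟨i, hi⟩ := Finite.exists_max fun i => (f i).degree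
  have hi0 : f i ≠ 0 := fun h0 => hj (by simpa [h0] using hi j)
  have hle : ∀ l, (f l).natDegree ≤ (f i).natDegree := fun l => natDegree_le_natDegree (hi l)
  refine ⟨i, degree_eq_of_le_of_coeff_ne_zero
    (natDegree_le_iff_degree_le.mp (natDegree_aeval_le_of_isHomogeneous hQ hle)) ?_⟩
  rw [coeff_aeval_of_isHomogeneous hQ hle]
  exact fun h0 => hi0 (leadingCoeff_eq_zero.mp (congrFun (h _ h0) i))

theorem exists_isPrimitive_dvd_aeval {n : ℕ} (hQ : Q.IsHomogeneous n) {p : k[X]}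
    (hp : Irreducible p) (h : ¬ IsAnisotropicOver (AdjoinRoot p) Q) :
    ∃ f : ι → k[X], p ∣ MvPolynomial.aeval f Q ∧ (∀ i, (f i).natDegree < p.natDegree) ∧
      ∀ r, (∀ i, r ∣ f i) → IsUnit r := by
  classical
  obtain ⟨_⟩ := nonempty_fintype ι
  obtain ⟨_⟩ : Nonempty (NormalizedGCDMonoid k[X]) := inferInstance
  simp only [IsAnisotropicOver, not_forall] at h
  obtain ⟨v, hv, hv0⟩ := h
  obtain ⟨i, hi⟩ := Function.ne_iff.mp hv0
  choose f hfdeg hfv using fun j => exists_natDegree_lt_mk_eq hp.natDegree_pos (v j)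
  have hfi : f i ≠ 0 := by
    intro h0
    exact hi (by simp [← hfv, h0])
  obtain ⟨g, hfg, hg⟩ := Finset.univ.extract_gcd f ⟨i, Finset.mem_univ i⟩
  set d := Finset.univ.gcd f
  replace hfg : f = d • g := funext fun j => hfg j (Finset.mem_univ j)
  have hpd : ¬ p ∣ d := fun hpd => hi <| by
    rw [← hfv, hfg, Pi.smul_apply, smul_eq_mul]
    exact AdjoinRoot.mk_eq_zero.mpr (hpd.mul_right _)
  have hpQ : p ∣ d ^ n * MvPolynomial.aeval g Q := by
    rw [← aeval_smul_of_isHomogeneous hQ, ← hfg, dvd_aeval_iff]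
    simpa only [hfv] using hv
  refine ⟨g, (hp.prime.dvd_or_dvd hpQ).resolve_left (hpd ∘ hp.prime.dvd_of_dvd_pow),
    fun j => ?_, ?_⟩
  · refine lt_of_le_of_lt ?_ (hfdeg j)
    rw [hfg, Pi.smul_apply, smul_eq_mul]
    rcases eq_or_ne (g j) 0 with h0 | h0
    · simp [h0]
    · have hd : d ≠ 0 := fun hd => hfi (by simp [hfg, hd])
      exact natDegree_le_of_dvd (dvd_mul_left _ _) (mul_ne_zero hd h0)
  · exact fun r hr => isUnit_of_dvd_one (hg ▸ Finset.dvd_gcd fun j _ => hr j)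

theorem IsAnisotropicOver.adjoinRoot (hQ : Q.IsHomogeneous 2) (h : IsAnisotropicOver k Q) {p : k[X]}
    (hp : Irreducible p) (hodd : Odd p.natDegree) : IsAnisotropicOver (AdjoinRoot p) Q := by
  induction hn : p.natDegree using Nat.strong_induction_on generalizing p with
  | _ n ih =>
  by_contra hiso
  obtain ⟨f, ⟨g, hg⟩, hdeg, hprim⟩ := exists_isPrimitive_dvd_aeval hQ hp hiso
  have hf : f ≠ 0 := by
    rintro rfl
    exact hp.not_isUnit (hprim p fun _ => dvd_zero p)
  obtain ⟨i, hi⟩ := h.exists_degree_aeval_eq hQ hf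
  have hg0 : g ≠ 0 := by
    rintro rfl
    rw [hg, mul_zero, degree_zero] at hi
    exact WithBot.bot_ne_coe hi
  replace hi := natDegree_eq_of_degree_eq_some hi
  rw [hg, natDegree_mul hp.ne_zero hg0] at hi
  have := hdeg i
  obtain ⟨r, hr, hrodd, hrg⟩ := exists_irreducible_odd_natDegree_dvd g (by grind)
  have hrlt : r.natDegree < n := (natDegree_le_of_dvd hrg hg0).trans_lt (by omega)
  have hzero := ih _ hrlt hr hrodd rfl _ ((dvd_aeval_iff Q r f).mp (hg ▸ hrg.mul_left p))
  exact hr.not_isUnit (hprim r fun i => AdjoinRoot.mk_eq_zero.mp (congrFun hzero i))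

theorem IsAnisotropicOver.of_odd_finrank (hQ : Q.IsHomogeneous 2) (h : IsAnisotropicOver k Q)
    {K : Type*} [Field K] [Algebra k K] (hodd : Odd (Module.finrank k K)) :
    IsAnisotropicOver K Q := by
  have : FiniteDimensional k K := .of_finrank_pos hodd.pos
  suffices htop : IsAnisotropicOver (⊤ : IntermediateField k K) Q from
    htop.of_injective topEquiv.symm.toAlgHom topEquiv.symm.injective
  induction (⊤ : IntermediateField k K) using induction_on_adjoin with
  | base =>
    exact h.of_injective (botEquiv k K).toAlgHom (botEquiv k K).injective
  | ih L x hL =>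
    have hx : IsIntegral L x := .of_finite L x
    have hxodd : Odd (minpoly L x).natDegree :=
      hodd.of_dvd_nat ((minpoly.degree_dvd hx).trans
        (Dvd.intro_left _ (Module.finrank_mul_finrank k L K)))
    have hroot := (isAnisotropicOver_map_iff.mpr hL).adjoinRoot (hQ.map (algebraMap k L))
      (minpoly.irreducible hx) hxodd
    have hadjoin := (isAnisotropicOver_map_iff (A := L⟮x⟯)).mp <| hroot.of_injective
      (adjoinRootEquivAdjoin L hx).symm.toAlgHom (adjoinRootEquivAdjoin L hx).symm.injective
    exact hadjoin

end Springer

section ReducedNorm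

variable {R : Type*} [CommRing R] {a b c : R}

/-- The reduced norm of a quaternion algebra in the presentation `i² = a + b i`, `j² = c`. -/
def reducedNorm (q : ℍ[R,a,b,c]) : R :=
  q.re ^ 2 + b * (q.re * q.imI) - a * q.imI ^ 2 -
    c * (q.imJ ^ 2 + b * (q.imJ * q.imK) - a * q.imK ^ 2)

/-- The reduced trace of a quaternion algebra in the presentation `i² = a + b i`, `j² = c`. -/
def reducedTrace (q : ℍ[R,a,b,c]) : R :=
  2 * q.re + b * q.imI

open Polynomial in
/-- The reduced characteristic polynomial of a quaternion algebra in the presentation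
`i² = a + b i`, `j² = c`. -/
noncomputable def reducedCharpoly (q : ℍ[R,a,b,c]) : R[X] :=
  X ^ 2 - C (reducedTrace q) * X + C (reducedNorm q)

theorem star_mul_self_eq_reducedNorm (q : ℍ[R,a,b,c]) :
    star q * q = algebraMap R ℍ[R,a,b,c] (reducedNorm q) := by
  rw [Algebra.algebraMap_eq_smul_one]
  ext <;> simp [reducedNorm] <;> ring

theorem mul_self_eq_reducedTrace_smul_sub (q : ℍ[R,a,b,c]) :
    q * q = reducedTrace q • q - algebraMap R ℍ[R,a,b,c] (reducedNorm q) := by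
  rw [Algebra.algebraMap_eq_smul_one]
  ext <;> simp [reducedNorm, reducedTrace] <;> ring

theorem aeval_reducedCharpoly (q : ℍ[R,a,b,c]) : Polynomial.aeval q (reducedCharpoly q) = 0 := by
  simp [reducedCharpoly, sq, mul_self_eq_reducedTrace_smul_sub, Algebra.smul_def]

theorem reducedCharpoly_eq_iff {a' b' c' : R} {p : ℍ[R,a,b,c]} {q : ℍ[R,a',b',c']} :
    reducedCharpoly p = reducedCharpoly q ↔
      reducedTrace p = reducedTrace q ∧ reducedNorm p = reducedNorm q := by
  refine ⟨fun h => ?_, fun ⟨ht, hn⟩ => by rw [reducedCharpoly, reducedCharpoly, ht, hn]⟩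
  constructor
  · simpa [reducedCharpoly, Polynomial.coeff_X, Polynomial.coeff_C] using
      congrArg (Polynomial.coeff · 1) h
  · simpa [reducedCharpoly] using congrArg (Polynomial.coeff · 0) h

theorem reducedNorm_mul (p q : ℍ[R,a,b,c]) :
    reducedNorm (p * q) = reducedNorm p * reducedNorm q := by
  simp [reducedNorm]; ring

theorem reducedNorm_add (p q : ℍ[R,a,b,c]) :
    reducedNorm (p + q) = reducedNorm p + reducedTrace (star p * q) + reducedNorm q := by
  simp [reducedNorm, reducedTrace]; ring

theorem reducedNorm_smul (r : R) (q : ℍ[R,a,b,c]) :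
    reducedNorm (r • q) = r ^ 2 * reducedNorm q := by
  simp [reducedNorm]; ring

theorem reducedTrace_add (p q : ℍ[R,a,b,c]) :
    reducedTrace (p + q) = reducedTrace p + reducedTrace q := by
  simp [reducedTrace]; ring

theorem reducedTrace_smul (r : R) (q : ℍ[R,a,b,c]) : reducedTrace (r • q) = r * reducedTrace q := by
  simp [reducedTrace]; ring

theorem quaternion_mem_bot_iff {q : ℍ[R,a,b,c]} :
    q ∈ (⊥ : Subalgebra R ℍ[R,a,b,c]) ↔ q.imI = 0 ∧ q.imJ = 0 ∧ q.imK = 0 := by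
  rw [Algebra.mem_bot]
  refine ⟨?_, fun h => ⟨q.re, ?_⟩⟩
  · rintro ⟨r, rfl⟩
    simp
  · ext <;> simp [h]

theorem reducedNorm_eq_zero_iff [NoZeroDivisors ℍ[R,a,b,c]] {q : ℍ[R,a,b,c]} :
    reducedNorm q = 0 ↔ q = 0 := by
  refine ⟨fun h => ?_, fun h => by simp [h, reducedNorm]⟩
  have hq := star_mul_self_eq_reducedNorm q
  rwa [h, map_zero, mul_eq_zero, star_eq_zero, or_self] at hq

end ReducedNorm

section Forms

open MvPolynomial

variable {R : Type*} [CommRing R]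

theorem isHomogeneous_reducedNorm {ι : Type*} {a b c : R} {n : ℕ}
    {q : ℍ[MvPolynomial ι R,C a,C b,C c]} (hre : q.re.IsHomogeneous n)
    (hI : q.imI.IsHomogeneous n) (hJ : q.imJ.IsHomogeneous n) (hK : q.imK.IsHomogeneous n) :
    (reducedNorm q).IsHomogeneous (2 * n) := by
  have hmul {p q : MvPolynomial ι R} (hp : p.IsHomogeneous n) (hq : q.IsHomogeneous n) :
      (p * q).IsHomogeneous (2 * n) := two_mul n ▸ hp.mul hq
  have hpow {p : MvPolynomial ι R} (hp : p.IsHomogeneous n) : (p ^ 2).IsHomogeneous (2 * n) :=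
    mul_comm n 2 ▸ hp.pow 2
  exact (((hpow hre).add ((hmul hre hI).C_mul b)).sub ((hpow hI).C_mul a)).sub
    ((((hpow hJ).add ((hmul hJ hK).C_mul b)).sub ((hpow hK).C_mul a)).C_mul c)

/-- The reduced norm of the generic element of `ℍ[R,a,1,c]`. -/
noncomputable def normForm (a c : R) : MvPolynomial (Fin 4) R :=
  reducedNorm (⟨X 0, X 1, X 2, X 3⟩ : ℍ[MvPolynomial (Fin 4) R,C a,C 1,C c])

/-- The Albert form of `ℍ[R,a₁,1,c₁]` and `ℍ[R,a₂,1,c₂]`: the difference of the reduced norms on the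
pairs of elements of equal reduced trace, taken modulo the diagonal scalars. The latter are
eliminated by requiring the second element to have no real part. -/
noncomputable def albertForm (a₁ c₁ a₂ c₂ : R) : MvPolynomial (Fin 6) R :=
  reducedNorm (⟨X 0, X 1, X 2, X 3⟩ : ℍ[MvPolynomial (Fin 6) R,C a₁,C 1,C c₁]) -
    reducedNorm (⟨0, C 2 * X 0 + X 1, X 4, X 5⟩ : ℍ[MvPolynomial (Fin 6) R,C a₂,C 1,C c₂])

theorem isHomogeneous_normForm (a c : R) : (normForm a c).IsHomogeneous 2 :=
  have hX (i : Fin 4) := isHomogeneous_X R i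
  isHomogeneous_reducedNorm (n := 1) (hX 0) (hX 1) (hX 2) (hX 3)

theorem isHomogeneous_albertForm (a₁ c₁ a₂ c₂ : R) : (albertForm a₁ c₁ a₂ c₂).IsHomogeneous 2 :=
  have hX (i : Fin 6) := isHomogeneous_X R i
  (isHomogeneous_reducedNorm (n := 1) (hX 0) (hX 1) (hX 2) (hX 3)).sub
    (isHomogeneous_reducedNorm (n := 1) (isHomogeneous_zero _ _ _)
      (((hX 0).C_mul 2).add (hX 1)) (hX 4) (hX 5))

theorem map_normForm {S : Type*} [CommRing S] (φ : R →+* S) (a c : R) :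
    (normForm a c).map φ = normForm (φ a) (φ c) := by
  simp [normForm, reducedNorm]

theorem map_albertForm {S : Type*} [CommRing S] (φ : R →+* S) (a₁ c₁ a₂ c₂ : R) :
    (albertForm a₁ c₁ a₂ c₂).map φ = albertForm (φ a₁) (φ c₁) (φ a₂) (φ c₂) := by
  simp [albertForm, reducedNorm, map_ofNat φ 2]

theorem aeval_normForm (a c : R) (v : Fin 4 → R) :
    aeval v (normForm a c) = reducedNorm (⟨v 0, v 1, v 2, v 3⟩ : ℍ[R,a,1,c]) := by
  simp [normForm, reducedNorm]

theorem aeval_albertForm (a₁ c₁ a₂ c₂ : R) (v : Fin 6 → R) :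
    aeval v (albertForm a₁ c₁ a₂ c₂) =
      reducedNorm (⟨v 0, v 1, v 2, v 3⟩ : ℍ[R,a₁,1,c₁]) -
        reducedNorm (⟨0, 2 * v 0 + v 1, v 4, v 5⟩ : ℍ[R,a₂,1,c₂]) := by
  simp [albertForm, reducedNorm]

theorem isAnisotropicOver_normForm_iff [IsDomain R] {a c : R} :
    IsAnisotropicOver R (normForm a c) ↔ NoZeroDivisors ℍ[R,a,1,c] := by
  refine ⟨fun h => ⟨fun {p q} hpq => ?_⟩, fun h v hv => ?_⟩
  · have hzero (x : ℍ[R,a,1,c]) (hx : reducedNorm x = 0) : x = 0 := by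
      have := h ![x.re, x.imI, x.imJ, x.imK] (by simpa [aeval_normForm] using hx)
      ext
      exacts [congrFun this 0, congrFun this 1, congrFun this 2, congrFun this 3]
    have hnorm : reducedNorm p * reducedNorm q = 0 := by
      rw [← reducedNorm_mul, hpq]
      simp [reducedNorm]
    exact (mul_eq_zero.mp hnorm).imp (hzero p) (hzero q)
  · rw [aeval_normForm, reducedNorm_eq_zero_iff, QuaternionAlgebra.ext_iff] at hv
    funext i
    fin_cases i
    exacts [hv.1, hv.2.1, hv.2.2.1, hv.2.2.2]

theorem not_isAnisotropicOver_albertForm_iff {a₁ c₁ a₂ c₂ : R} [NoZeroDivisors ℍ[R,a₂,1,c₂]] :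
    ¬ IsAnisotropicOver R (albertForm a₁ c₁ a₂ c₂) ↔
      ∃ (x₁ : ℍ[R,a₁,1,c₁]) (x₂ : ℍ[R,a₂,1,c₂]), x₁ ∉ (⊥ : Subalgebra R ℍ[R,a₁,1,c₁]) ∧
        reducedCharpoly x₁ = reducedCharpoly x₂ := by
  simp only [IsAnisotropicOver, not_forall, quaternion_mem_bot_iff, reducedCharpoly_eq_iff]
  constructor
  · rintro ⟨v, hv, hv0⟩
    rw [aeval_albertForm, sub_eq_zero] at hv
    refine ⟨_, _, fun ⟨hI, hJ, hK⟩ => hv0 ?_, by simp [reducedTrace], hv⟩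
    dsimp only at hI hJ hK
    have hscalar : reducedNorm (⟨-v 0, 2 * v 0, v 4, v 5⟩ : ℍ[R,a₂,1,c₂]) = 0 := by
      simp only [reducedNorm, hI, hJ, hK] at hv ⊢
      linear_combination -hv
    rw [reducedNorm_eq_zero_iff, QuaternionAlgebra.ext_iff] at hscalar
    obtain ⟨h0, -, h4, h5⟩ := hscalar
    funext i
    fin_cases i
    exacts [neg_eq_zero.mp h0, hI, hJ, hK, h4, h5]
  · rintro ⟨x₁, x₂, hx₁, htr, hnrd⟩
    simp only [reducedTrace, reducedNorm] at htr hnrd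
    refine ⟨![x₁.re - x₂.re, x₁.imI, x₁.imJ, x₁.imK, x₂.imJ, x₂.imK], ?_, fun h0 => hx₁ ?_⟩
    · have himI : 2 * (x₁.re - x₂.re) + x₁.imI = x₂.imI := by linear_combination htr
      simp only [aeval_albertForm, Matrix.cons_val, himI, reducedNorm]
      linear_combination hnrd - x₂.re * htr
    · exact ⟨congrFun h0 1, congrFun h0 2, congrFun h0 3⟩

end Forms

section MinimalPolynomial

open Polynomial

variable {K : Type*} [Field K] {a b c : K}

theorem separable_sq_sub_C_mul_X_add_C_iff {t n : K} (h : Irreducible (X ^ 2 - C t * X + C n)) :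
    (X ^ 2 - C t * X + C n).Separable ↔ (2 : K) ≠ 0 ∨ t ≠ 0 := by
  rw [separable_iff_derivative_ne_zero h, ← not_and_or, not_iff_not]
  have hderiv : derivative (X ^ 2 - C t * X + C n) = C 2 * X - C t := by
    simp [one_add_one_eq_two]
  rw [hderiv]
  refine ⟨fun h0 => ⟨?_, ?_⟩, fun ⟨h2, ht⟩ => by simp [h2, ht]⟩
  · simpa [coeff_C] using congrArg (coeff · 1) h0
  · simpa using congrArg (coeff · 0) h0

theorem natDegree_reducedCharpoly (q : ℍ[K,a,b,c]) : (reducedCharpoly q).natDegree = 2 := by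
  unfold reducedCharpoly
  compute_degree!

theorem minpoly_eq_reducedCharpoly {q : ℍ[K,a,b,c]} (hq : q ∉ (⊥ : Subalgebra K ℍ[K,a,b,c])) :
    minpoly K q = reducedCharpoly q := by
  have hmonic : (reducedCharpoly q).Monic := by
    unfold reducedCharpoly
    monicity!
  have hint : IsIntegral K q := ⟨_, hmonic, aeval_reducedCharpoly q⟩
  refine (eq_of_monic_of_dvd_of_natDegree_le (minpoly.monic hint) hmonic
    (minpoly.dvd K q (aeval_reducedCharpoly q)) ((natDegree_reducedCharpoly q).trans_le ?_)).symm
  exact (minpoly.two_le_natDegree_iff hint).mpr (mt Algebra.mem_bot.mpr hq)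

theorem irreducible_reducedCharpoly [NoZeroDivisors ℍ[K,a,b,c]] {q : ℍ[K,a,b,c]}
    (hq : q ∉ (⊥ : Subalgebra K ℍ[K,a,b,c])) : Irreducible (reducedCharpoly q) := by
  have := NoZeroDivisors.to_isDomain ℍ[K,a,b,c]
  exact minpoly_eq_reducedCharpoly hq ▸ minpoly.irreducible (.of_finite K q)

theorem separable_reducedCharpoly_iff [NoZeroDivisors ℍ[K,a,b,c]] {q : ℍ[K,a,b,c]}
    (hq : q ∉ (⊥ : Subalgebra K ℍ[K,a,b,c])) :
    (reducedCharpoly q).Separable ↔ (2 : K) ≠ 0 ∨ reducedTrace q ≠ 0 :=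
  separable_sq_sub_C_mul_X_add_C_iff (irreducible_reducedCharpoly hq)

end MinimalPolynomial

section DivisionAlgebra

open Algebra Module Polynomial

variable {k D : Type*} [Field k] [DivisionRing D] [Algebra k D]

theorem finrank_subalgebra_dvd [FiniteDimensional k D] (S : Subalgebra k D) :
    finrank k S ∣ finrank k D :=
  letI := divisionRingOfFiniteDimensional k S
  ⟨_, (finrank_mul_finrank k S D).symm⟩

theorem finrank_subalgebra_lt_of_lt [FiniteDimensional k D] {S T : Subalgebra k D} (h : S < T) :
    finrank k S < finrank k T :=
  Submodule.finrank_lt_finrank_of_lt (OrderEmbedding.lt_iff_lt Subalgebra.toSubmodule |>.mpr h)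

theorem finrank_subalgebra_of_bot_lt_of_lt_top {p : ℕ} (hp : p.Prime) (hD : finrank k D = p ^ 2)
    {S : Subalgebra k D} (hbot : ⊥ < S) (htop : S < ⊤) : finrank k S = p := by
  have : FiniteDimensional k D := .of_finrank_pos (hD ▸ pow_pos hp.pos 2)
  have hlt := finrank_subalgebra_lt_of_lt hbot
  have hgt := finrank_subalgebra_lt_of_lt htop
  rw [Subalgebra.finrank_bot] at hlt
  rw [subalgebra_top_finrank_eq_submodule_top_finrank, finrank_top, hD] at hgt
  have hdvd := hD ▸ finrank_subalgebra_dvd S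
  obtain ⟨n, hn, hS⟩ := (Nat.dvd_prime_pow hp).mp hdvd
  interval_cases n <;> simp_all

theorem adjoin_singleton_lt_adjoin_pair {x y : D} (h : x * y ≠ y * x) :
    adjoin k {x} < adjoin k {x, y} := by
  refine lt_of_le_of_ne (adjoin_mono (by simp)) fun heq => h ?_
  have hy : y ∈ adjoin k {x} := heq ▸ subset_adjoin (by simp)
  exact (commute_of_mem_adjoin_self hy).eq

theorem bot_lt_adjoin_singleton {x : D} (hx : x ∉ (⊥ : Subalgebra k D)) : ⊥ < adjoin k {x} :=
  bot_lt_iff_ne_bot.mpr fun h => hx (h ▸ self_mem_adjoin_singleton k x)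

theorem adjoin_pair_eq_top {p : ℕ} (hp : p.Prime) (hD : finrank k D = p ^ 2) {x y : D}
    (h : x * y ≠ y * x) : adjoin k {x, y} = ⊤ := by
  have : FiniteDimensional k D := .of_finrank_pos (hD ▸ pow_pos hp.pos 2)
  have hx : ⊥ < adjoin k {x} := bot_lt_adjoin_singleton fun hx => h <| by
    obtain ⟨r, rfl⟩ := mem_bot.mp hx
    exact commutes r y
  have hlt := adjoin_singleton_lt_adjoin_pair (k := k) h
  by_contra hne
  have htop := lt_top_iff_ne_top.mpr hne
  have hpair := finrank_subalgebra_of_bot_lt_of_lt_top hp hD (hx.trans hlt) htop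
  have hsingle := finrank_subalgebra_of_bot_lt_of_lt_top hp hD hx (hlt.trans htop)
  exact (finrank_subalgebra_lt_of_lt hlt).ne (hsingle.trans hpair.symm)

variable [IsCentral k D]

theorem exists_mul_ne_mul_of_notMem_bot {x : D} (hx : x ∉ (⊥ : Subalgebra k D)) :
    ∃ y, x * y ≠ y * x := by
  by_contra! h
  exact hx (IsCentral.out (Subalgebra.mem_center_iff.mpr fun y => (h y).symm))

theorem natDegree_minpoly_eq_two (hD : finrank k D = 4) {x : D}
    (hx : x ∉ (⊥ : Subalgebra k D)) : (minpoly k x).natDegree = 2 := by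
  have : FiniteDimensional k D := .of_finrank_pos (by omega)
  obtain ⟨y, hy⟩ := exists_mul_ne_mul_of_notMem_bot hx
  have hS : finrank k (adjoin k {x}) = 2 := finrank_subalgebra_of_bot_lt_of_lt_top Nat.prime_two hD
    (bot_lt_adjoin_singleton hx) ((adjoin_singleton_lt_adjoin_pair hy).trans_le le_top)
  refine le_antisymm ?_ ((minpoly.two_le_natDegree_iff (.of_finite k x)).mpr
    fun h => hx (mem_bot.mpr h))
  have hle := minpoly.natDegree_le (A := k) (⟨x, self_mem_adjoin_singleton k x⟩ : adjoin k {x})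
  rwa [← minpoly.algHom_eq (adjoin k {x}).val Subtype.val_injective, hS] at hle

theorem mem_bot_of_commute {p : ℕ} (hp : p.Prime) (hD : finrank k D = p ^ 2) {x y z : D}
    (h : x * y ≠ y * x) (hx : Commute x z) (hy : Commute y z) : z ∈ (⊥ : Subalgebra k D) := by
  have hle : adjoin k {x, y} ≤ Subalgebra.centralizer k {z} := adjoin_le fun w hw =>
    Subalgebra.mem_centralizer_iff k |>.mpr <| by
      rcases hw with rfl | rfl
      exacts [fun _ h => h ▸ hx.eq.symm, fun _ h => h ▸ hy.eq.symm]
  rw [adjoin_pair_eq_top hp hD h] at hle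
  exact IsCentral.out (Subalgebra.mem_center_iff.mpr fun w =>
    ((Subalgebra.mem_centralizer_iff k).mp (hle mem_top) z rfl).symm)

end DivisionAlgebra

section QuaternionPresentation

open Algebra Module Polynomial

variable {k D : Type*} [Field k]

theorem exists_smul_add_mul_self_eq [Ring D] [Algebra k D] {x : D} {t n : k}
    (hx : x * x = t • x - n • (1 : D)) (h : (2 : k) ≠ 0 ∨ t ≠ 0) :
    ∃ u v a : k, u ≠ 0 ∧
      (u • x + v • (1 : D)) * (u • x + v • (1 : D)) = a • (1 : D) + (u • x + v • (1 : D)) := by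
  rcases eq_or_ne t 0 with rfl | ht
  · have h2 : (2 : k) ≠ 0 := by simpa using h
    refine ⟨1, 2⁻¹, -n - 2⁻¹ ^ 2, one_ne_zero, ?_⟩
    simp only [add_mul, mul_add, smul_mul_assoc, mul_smul_comm, one_mul, mul_one, hx]
    match_scalars <;> field_simp <;> ring
  · refine ⟨t⁻¹, 0, -n * t⁻¹ ^ 2, inv_ne_zero ht, ?_⟩
    simp only [zero_smul, add_zero, smul_mul_assoc, mul_smul_comm, hx]
    match_scalars <;> field_simp

theorem commutator_mul_eq [Ring D] [Algebra k D] {i : D} {a : k}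
    (hi : i * i = a • (1 : D) + i) (y : D) :
    (i * y - y * i) * i = i * y - y * i - i * (i * y - y * i) := by
  have hleft : i * (i * y) = a • y + i * y := by
    rw [← mul_assoc, hi, add_mul, smul_mul_assoc, one_mul]
  have hright : y * i * i = a • y + y * i := by rw [mul_assoc, hi, mul_add, mul_smul_comm, mul_one]
  rw [sub_mul, mul_sub, hleft, hright, mul_assoc]
  abel

theorem mul_commutator_ne [DivisionRing D] [Algebra k D] {i y : D} {a : k}
    (hi : i * i = a • (1 : D) + i) (hy : i * y ≠ y * i) :
    i * (i * y - y * i) ≠ (i * y - y * i) * i := fun hcomm => by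
  have hj : i * y - y * i ≠ 0 := sub_ne_zero.mpr hy
  have htwo : (2 * i - 1) * (i * y - y * i) = 0 := by
    rw [commutator_mul_eq hi, eq_sub_iff_add_eq] at hcomm
    rw [sub_mul, one_mul, two_mul, add_mul, hcomm, sub_self]
  have hi2 : 2 * i = 1 := sub_eq_zero.mp ((mul_eq_zero.mp htwo).resolve_right hj)
  refine hj ?_
  calc i * y - y * i = 2 * i * (i * y - y * i) := by rw [hi2, one_mul]
    _ = i * ((2 * i) * y - y * (2 * i)) := by noncomm_ring
    _ = 0 := by rw [hi2, one_mul, mul_one, sub_self, mul_zero]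

variable [DivisionRing D] [Algebra k D] [IsCentral k D]

theorem exists_mul_self_eq_smul_one_add (hD : finrank k D = 4) :
    ∃ (i : D) (a : k), i ∉ (⊥ : Subalgebra k D) ∧ i * i = a • (1 : D) + i := by
  have : FiniteDimensional k D := .of_finrank_pos (by omega)
  obtain ⟨x, hx, hsep⟩ := JacobsonNoether.exists_separable_and_not_isCentral' (L := k) (D := D)
    (mt Subalgebra.bot_eq_top_iff_finrank_eq_one.mp (by omega))
  have hdeg := natDegree_minpoly_eq_two hD hx
  have hcoeff : (minpoly k x).coeff 2 = 1 :=
    hdeg ▸ (minpoly.monic (.of_finite k x)).coeff_natDegree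
  have hpoly : minpoly k x =
      X ^ 2 - C (-(minpoly k x).coeff 1) * X + C ((minpoly k x).coeff 0) := by
    conv_lhs => rw [eq_quadratic_of_degree_le_two (natDegree_le_iff_degree_le.mp hdeg.le)]
    simp [hcoeff]
  have hirr := minpoly.irreducible (IsIntegral.of_finite k x)
  have hroot := minpoly.aeval k x
  rw [IsSeparable, hpoly] at hsep
  rw [hpoly] at hirr hroot
  have hxx : x * x = (-(minpoly k x).coeff 1) • x - (minpoly k x).coeff 0 • (1 : D) := by
    rw [eq_sub_iff_add_eq, ← sub_eq_zero, ← hroot, Algebra.smul_def, Algebra.smul_def]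
    simp [sq]
    abel
  obtain ⟨u, v, a, hu, ha⟩ := exists_smul_add_mul_self_eq hxx
    ((separable_sq_sub_C_mul_X_add_C_iff hirr).mp hsep)
  refine ⟨_, a, fun hmem => hx ?_, ha⟩
  have hux := sub_mem hmem (Subalgebra.smul_mem _ (one_mem _) v)
  simpa [smul_smul, hu] using Subalgebra.smul_mem _ hux u⁻¹

theorem exists_quaternionBasis (hD : finrank k D = 4) :
    ∃ (a c : k) (q : QuaternionAlgebra.Basis D a 1 c), q.i * q.j ≠ q.j * q.i := by
  obtain ⟨i, a, hi, hii⟩ := exists_mul_self_eq_smul_one_add (k := k) hD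
  obtain ⟨y, hy⟩ := exists_mul_ne_mul_of_notMem_bot hi
  have hij := mul_commutator_ne hii hy
  have hji := commutator_mul_eq hii y
  generalize i * y - y * i = j at hij hji
  have hcomm : Commute i (j * j) := by
    rw [commute_iff_eq, mul_assoc, hji, mul_sub, ← mul_assoc j i, hji, sub_mul, sub_sub_cancel,
      mul_assoc]
  obtain ⟨c, hc⟩ := mem_bot.mp <| mem_bot_of_commute (k := k) Nat.prime_two hD hij hcomm
    ((Commute.refl j).mul_right (Commute.refl j))
  exact ⟨a, c,
    { i := i
      j := j
      k := i * j
      i_mul_i := by rw [hii, one_smul]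
      j_mul_j := by rw [← hc, algebraMap_eq_smul_one]
      i_mul_j := rfl
      j_mul_i := by rw [hji, one_smul] }, hij⟩

theorem exists_algEquiv_quaternionAlgebra (hD : finrank k D = 4) :
    ∃ a c : k, Nonempty (ℍ[k,a,1,c] ≃ₐ[k] D) := by
  have : FiniteDimensional k D := .of_finrank_pos (by omega)
  obtain ⟨a, c, q, hq⟩ := exists_quaternionBasis (k := k) hD
  have hsurj : Function.Surjective q.liftHom := by
    rw [← AlgHom.range_eq_top, q.range_liftHom, _root_.eq_top_iff,
      ← adjoin_pair_eq_top (k := k) Nat.prime_two hD hq]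
    exact adjoin_mono (by grind)
  have hfinrank : finrank k ℍ[k,a,1,c] = finrank k D := by
    rw [QuaternionAlgebra.finrank_eq_four, hD]
  exact ⟨a, c, ⟨AlgEquiv.ofBijective q.liftHom
    ⟨(LinearMap.injective_iff_surjective_of_finrank_eq_finrank
      (f := q.liftHom.toLinearMap) hfinrank).mpr hsurj, hsurj⟩⟩⟩

end QuaternionPresentation

section Splitting

open Module TensorProduct

theorem nonempty_algHom_of_end {K L A V : Type*} [Field K] [Field L] [Algebra K L] [Ring A]
    [IsDomain A] [Algebra K A] [FiniteDimensional K A] [AddCommGroup V] [Module K V] [Module L V]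
    [IsScalarTower K L V] (φ : A →ₐ[K] End L V) (hV : finrank K V = finrank K A) :
    Nonempty (L →ₐ[K] A) := by
  let := divisionRingOfFiniteDimensional K A
  have : FiniteDimensional K V := .of_finrank_pos (hV ▸ finrank_pos)
  have : Nontrivial V := nontrivial_of_finrank_pos (R := K) (hV ▸ finrank_pos)
  obtain ⟨m, hm⟩ := exists_ne (0 : V)
  let ev : A →ₗ[K] V :=
    { toFun := fun a => φ a m
      map_add' := by simp
      map_smul' := by simp }
  have hinj : Function.Injective ev := by
    refine (injective_iff_map_eq_zero ev).mpr fun a ha => by_contra fun ha0 => hm ?_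
    change φ a m = 0 at ha
    calc m = φ (a⁻¹ * a) m := by rw [inv_mul_cancel₀ ha0, map_one, End.one_apply]
      _ = 0 := by rw [map_mul, End.mul_apply, ha, map_zero]
  -- Through the identification `A ≃ V`, `a ↦ a m`, an element `θ` of `L` corresponds to the `a`
  -- such that `a m = θ m`; commutation of `L` with `A` makes this multiplicative.
  let e := LinearEquiv.ofInjectiveOfFinrankEq ev hinj hV.symm
  have he (v : V) : φ (e.symm v) m = v := e.apply_symm_apply v
  refine ⟨.ofLinearMap (e.symm ∘ₗ (LinearMap.toSpanSingleton L V m).restrictScalars K) ?_ ?_⟩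
  · refine e.symm_apply_eq.mpr ?_
    change (1 : L) • m = φ 1 m
    rw [one_smul, map_one, End.one_apply]
  · intro θ η
    refine e.symm_apply_eq.mpr ?_
    change (θ * η) • m = φ (e.symm (θ • m) * e.symm (η • m)) m
    rw [map_mul, End.mul_apply, he, map_smul, he, smul_smul, mul_comm]

variable {k D : Type*} [Field k] [DivisionRing D] [Algebra k D]

theorem eq_zero_of_forall_sum_mul_mul_eq_zero [Algebra.IsCentral k D] {ι : Type*} {b : ι → D}
    (hb : LinearIndependent k b) (s : Finset ι) (d : ι → D)
    (h : ∀ x, ∑ i ∈ s, d i * x * b i = 0) : ∀ i ∈ s, d i = 0 := by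
  classical
  induction s using Finset.induction generalizing d with
  | empty => simp
  | insert j s hj ih =>
    suffices hj0 : d j = 0 from
      Finset.forall_mem_insert _ _ _ |>.mpr ⟨hj0, ih d fun x => by simpa [hj, hj0] using h x⟩
    by_contra hne
    obtain ⟨e, he, hej⟩ : ∃ e : ι → D, (∀ x, ∑ i ∈ insert j s, e i * x * b i = 0) ∧ e j = 1 :=
      ⟨fun i => (d j)⁻¹ * d i, fun x => by simpa [mul_assoc, ← Finset.mul_sum] using Or.inr (h x),
        inv_mul_cancel₀ hne⟩
    -- Commuting with `y` kills the coefficient `e j = 1` and leaves a shorter relation.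
    have hcommute (y : D) : ∀ i ∈ s, y * e i - e i * y = 0 := ih _ fun x => by
      have hsub : y * ∑ i ∈ insert j s, e i * x * b i = ∑ i ∈ insert j s, e i * (y * x) * b i := by
        rw [he, he, mul_zero]
      rw [Finset.sum_insert hj, Finset.sum_insert hj, hej, mul_add, one_mul, one_mul, ← mul_assoc,
        add_right_inj, Finset.mul_sum, ← sub_eq_zero, ← Finset.sum_sub_distrib] at hsub
      simpa only [sub_mul, mul_assoc] using hsub
    have hscalar : ∀ i ∈ insert j s, e i ∈ (⊥ : Subalgebra k D) := by
      refine Finset.forall_mem_insert _ _ _ |>.mpr ⟨hej ▸ one_mem _, fun i hi => ?_⟩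
      exact Algebra.IsCentral.out <|
        Subalgebra.mem_center_iff.mpr fun y => sub_eq_zero.mp (hcommute y i hi)
    choose! r hr using fun i hi => Algebra.mem_bot.mp (hscalar i hi)
    have hrj := linearIndependent_iff'.mp hb (insert j s) r (by
      rw [← he 1]
      exact Finset.sum_congr rfl fun i hi => by rw [Algebra.smul_def, hr i hi, mul_one]) j
      (Finset.mem_insert_self j s)
    have := hr j (Finset.mem_insert_self j s)
    simp [hrj, hej] at this

variable {F : Type*} [Field F] [Algebra k F]

section

variable [Module F D] [IsScalarTower k F D] [SMulCommClass D F D]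

variable (k F D) in
/-- The action of `F ⊗[k] D` on `D` by which `D` acts by left multiplication and `F` through its
module structure. -/
noncomputable def tensorToEnd : F ⊗[k] D →ₐ[F] End F D :=
  Algebra.TensorProduct.lift (Algebra.ofId F (End F D)) (Algebra.lsmul k F D) fun x d => by
    simpa only [Algebra.ofId_apply] using Algebra.commute_algebraMap_left x (Algebra.lsmul k F D d)

theorem tensorToEnd_tmul_apply (x : F) (d e : D) :
    tensorToEnd k D F (x ⊗ₜ d) e = x • (d * e) := by
  simp [tensorToEnd, Algebra.ofId_apply]

variable [Algebra.IsCentral k D]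

theorem tensorToEnd_injective : Function.Injective (tensorToEnd k D F) := by
  classical
  let b := Basis.ofVectorSpace k F
  have hb : LinearIndependent k fun i => b i • (1 : D) :=
    b.linearIndependent.map' ((LinearMap.toSpanSingleton F D 1).restrictScalars k)
      (LinearMap.ker_eq_bot.mpr (smul_left_injective F one_ne_zero))
  refine (injective_iff_map_eq_zero _).mpr fun z hz => ?_
  obtain ⟨d, rfl⟩ := (equivFinsuppOfBasisLeft b).symm.surjective z
  rw [equivFinsuppOfBasisLeft_symm_apply] at hz ⊢
  have hd := eq_zero_of_forall_sum_mul_mul_eq_zero hb d.support d fun x => ?_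
  · exact Finset.sum_eq_zero fun i hi => congrArg (b i ⊗ₜ ·) (hd i hi) |>.trans (tmul_zero D (b i))
  · have := SMulCommClass.symm D F D
    simpa [Finsupp.sum, tensorToEnd_tmul_apply] using LinearMap.congr_fun hz x

theorem nonempty_algEquiv_matrix_of_module [FiniteDimensional k D] {n : ℕ} (hF : finrank k F = n)
    (hD : finrank k D = n ^ 2) : Nonempty (F ⊗[k] D ≃ₐ[F] Matrix (Fin n) (Fin n) F) := by
  have : FiniteDimensional F D := .right k F D
  have hn : 0 < n := Nat.pos_of_ne_zero fun h => by
    have := hD ▸ finrank_pos (R := k) (M := D)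
    simp [h] at this
  have hFD : finrank F D = n :=
    Nat.eq_of_mul_eq_mul_left hn (by rw [← sq, ← hD, ← finrank_mul_finrank k F D, hF])
  have hfinrank : finrank F (F ⊗[k] D) = finrank F (End F D) := by
    rw [finrank_baseChange, finrank_linearMap, hD, hFD, sq]
  exact ⟨(AlgEquiv.ofBijective (tensorToEnd k D F) ⟨tensorToEnd_injective,
    (LinearMap.injective_iff_surjective_of_finrank_eq_finrank
      (f := (tensorToEnd k D F).toLinearMap) hfinrank).mp tensorToEnd_injective⟩).trans
    (LinearMap.toMatrixAlgEquiv (finBasisOfFinrankEq F D hFD))⟩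

end

theorem nonempty_algEquiv_matrix_of_algHom [Algebra.IsCentral k D] [FiniteDimensional k D]
    (ψ : F →ₐ[k] D) {n : ℕ} (hF : finrank k F = n) (hD : finrank k D = n ^ 2) :
    Nonempty (F ⊗[k] D ≃ₐ[F] Matrix (Fin n) (Fin n) F) := by
  let : Module F D := .compHom D <|
    (ψ : F →+* D).toOpposite fun x y => (Commute.all x y).map (ψ : F →+* D)
  have hsmul (x : F) (d : D) : x • d = d * ψ x := rfl
  have : IsScalarTower k F D := ⟨fun r x d => by simp [hsmul]⟩
  have : SMulCommClass D F D := ⟨fun e x d => by simp [hsmul, mul_assoc]⟩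
  exact nonempty_algEquiv_matrix_of_module hF hD

end Splitting

section OddExtension

open Module

variable {k K K' : Type*} [Field k] [Field K] [Field K'] [Algebra k K] [Algebra K K']

theorem nonempty_quaternionAlgebra_algHom_of_isScalarTower {a b c : k} {A : Type*} [Ring A]
    [Algebra k A] [Algebra K A] [IsScalarTower k K A] (φ : ℍ[k,a,b,c] →ₐ[k] A) :
    Nonempty (ℍ[K,algebraMap k K a,algebraMap k K b,algebraMap k K c] →ₐ[K] A) := by
  let q := QuaternionAlgebra.lift.symm φ
  exact ⟨QuaternionAlgebra.lift
    { i := q.i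
      j := q.j
      k := q.k
      i_mul_i := by simp [q.i_mul_i]
      j_mul_j := by simp [q.j_mul_j]
      i_mul_j := q.i_mul_j
      j_mul_i := by simp [q.j_mul_i] }⟩

theorem noZeroDivisors_quaternionAlgebra_of_odd_finrank (hodd : Odd (finrank k K)) (a c : k)
    [NoZeroDivisors ℍ[k,a,1,c]] : NoZeroDivisors ℍ[K,algebraMap k K a,1,algebraMap k K c] := by
  rw [← isAnisotropicOver_normForm_iff, ← map_normForm, isAnisotropicOver_map_iff]
  exact (isAnisotropicOver_normForm_iff.mpr ‹_›).of_odd_finrank (isHomogeneous_normForm a c) hodd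

theorem nonempty_algHom_quaternionAlgebra_of_splits [Algebra k K'] [IsScalarTower k K K']
    (hK' : finrank K K' = 2) {a c : k} [NoZeroDivisors ℍ[K,algebraMap k K a,1,algebraMap k K c]]
    {D : Type*} [Ring D] [Algebra k D] (e : ℍ[k,a,1,c] ≃ₐ[k] D)
    (h : Nonempty (K' ⊗[k] D ≃ₐ[K'] Matrix (Fin 2) (Fin 2) K')) :
    Nonempty (K' →ₐ[K] ℍ[K,algebraMap k K a,1,algebraMap k K c]) := by
  obtain ⟨f⟩ := h
  let toEnd : K' ⊗[k] D →ₐ[K'] End K' (Fin 2 → K') := (f.trans Matrix.toLinAlgEquiv').toAlgHom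
  obtain ⟨φ⟩ := nonempty_quaternionAlgebra_algHom_of_isScalarTower (K := K) <|
    (toEnd.restrictScalars k).comp (Algebra.TensorProduct.includeRight.comp e.toAlgHom)
  rw [map_one] at φ
  have := NoZeroDivisors.to_isDomain ℍ[K,algebraMap k K a,1,algebraMap k K c]
  have : FiniteDimensional K K' := .of_finrank_pos (by omega)
  refine nonempty_algHom_of_end φ ?_
  rw [QuaternionAlgebra.finrank_eq_four, finrank_pi_fintype]
  simp [hK']

theorem exists_reducedCharpoly_eq_of_algHom (hK' : finrank K K' ≠ 1) {a₁ c₁ a₂ c₂ : K}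
    (φ₁ : K' →ₐ[K] ℍ[K,a₁,1,c₁]) (φ₂ : K' →ₐ[K] ℍ[K,a₂,1,c₂]) :
    ∃ (x₁ : ℍ[K,a₁,1,c₁]) (x₂ : ℍ[K,a₂,1,c₂]), x₁ ∉ (⊥ : Subalgebra K ℍ[K,a₁,1,c₁]) ∧
      reducedCharpoly x₁ = reducedCharpoly x₂ := by
  obtain ⟨θ, -, hθ⟩ := SetLike.exists_of_lt <|
    lt_top_iff_ne_top.mpr (mt Subalgebra.bot_eq_top_iff_finrank_eq_one.mp hK')
  have hbot {a c : K} (φ : K' →ₐ[K] ℍ[K,a,1,c]) : φ θ ∉ (⊥ : Subalgebra K ℍ[K,a,1,c]) := by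
    rintro ⟨r, hr⟩
    exact hθ ⟨r, φ.toRingHom.injective (by simpa using hr)⟩
  refine ⟨φ₁ θ, φ₂ θ, hbot φ₁, ?_⟩
  rw [← minpoly_eq_reducedCharpoly (hbot φ₁), ← minpoly_eq_reducedCharpoly (hbot φ₂),
    minpoly.algHom_eq φ₁ φ₁.toRingHom.injective, minpoly.algHom_eq φ₂ φ₂.toRingHom.injective]

theorem exists_reducedCharpoly_eq_of_odd_finrank (hodd : Odd (finrank k K)) {a₁ c₁ a₂ c₂ : k}
    [NoZeroDivisors ℍ[k,a₂,1,c₂]]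
    (h : ∃ (x₁ : ℍ[K,algebraMap k K a₁,1,algebraMap k K c₁])
      (x₂ : ℍ[K,algebraMap k K a₂,1,algebraMap k K c₂]),
      x₁ ∉ (⊥ : Subalgebra K ℍ[K,algebraMap k K a₁,1,algebraMap k K c₁]) ∧
        reducedCharpoly x₁ = reducedCharpoly x₂) :
    ∃ (x₁ : ℍ[k,a₁,1,c₁]) (x₂ : ℍ[k,a₂,1,c₂]), x₁ ∉ (⊥ : Subalgebra k ℍ[k,a₁,1,c₁]) ∧
      reducedCharpoly x₁ = reducedCharpoly x₂ := by
  have := noZeroDivisors_quaternionAlgebra_of_odd_finrank hodd a₂ c₂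
  rw [← not_isAnisotropicOver_albertForm_iff] at h ⊢
  rw [← map_albertForm, isAnisotropicOver_map_iff] at h
  exact fun hk => h (hk.of_odd_finrank (isHomogeneous_albertForm a₁ c₁ a₂ c₂) hodd)

end OddExtension

section SeparableQuadratic

open Polynomial

variable {k : Type*} [Field k] {a₁ c₁ a₂ c₂ : k}

theorem exists_reducedTrace_star_mul_ne_zero {a c : k} [NoZeroDivisors ℍ[k,a,1,c]]
    (h2 : (2 : k) = 0) {x : ℍ[k,a,1,c]} (hx : x ∉ (⊥ : Subalgebra k ℍ[k,a,1,c]))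
    (htr : reducedTrace x = 0) :
    ∃ z : ℍ[k,a,1,c], reducedTrace z = 0 ∧ reducedTrace (star z * x) ≠ 0 := by
  have hc : c ≠ 0 := fun hc => by
    have hj : (⟨0, 0, 1, 0⟩ : ℍ[k,a,1,c]) = 0 :=
      reducedNorm_eq_zero_iff.mp (by simp [reducedNorm, hc])
    exact one_ne_zero (congrArg QuaternionAlgebra.imJ hj)
  have himI : x.imI = 0 := by simpa [reducedTrace, h2] using htr
  rcases eq_or_ne x.imK 0 with hK | hK
  · have hJ : x.imJ ≠ 0 := fun hJ => hx (quaternion_mem_bot_iff.mpr ⟨himI, hJ, hK⟩)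
    refine ⟨⟨0, 0, 0, 1⟩, by simp [reducedTrace], ?_⟩
    simp [reducedTrace, h2, hc, hJ, hK, himI]
  · refine ⟨⟨0, 0, 1, 0⟩, by simp [reducedTrace], ?_⟩
    simp [reducedTrace, h2, hc, hK, himI]

theorem exists_reducedCharpoly_eq_separable [NoZeroDivisors ℍ[k,a₁,1,c₁]]
    (h : ∃ (x₁ : ℍ[k,a₁,1,c₁]) (x₂ : ℍ[k,a₂,1,c₂]), x₁ ∉ (⊥ : Subalgebra k ℍ[k,a₁,1,c₁]) ∧
      reducedCharpoly x₁ = reducedCharpoly x₂) :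
    ∃ (y₁ : ℍ[k,a₁,1,c₁]) (y₂ : ℍ[k,a₂,1,c₂]), y₁ ∉ (⊥ : Subalgebra k ℍ[k,a₁,1,c₁]) ∧
      reducedCharpoly y₁ = reducedCharpoly y₂ ∧ (reducedCharpoly y₁).Separable := by
  obtain ⟨x₁, x₂, hx₁, hx⟩ := h
  by_cases hsep : (reducedCharpoly x₁).Separable
  · exact ⟨x₁, x₂, hx₁, hx, hsep⟩
  obtain ⟨h2, ht₁⟩ : (2 : k) = 0 ∧ reducedTrace x₁ = 0 := by
    simpa [separable_reducedCharpoly_iff hx₁, not_or] using hsep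
  obtain ⟨htr, hnrd⟩ := reducedCharpoly_eq_iff.mp hx
  obtain ⟨z, hz, hzx⟩ := exists_reducedTrace_star_mul_ne_zero h2 hx₁ ht₁
  let i₂ : ℍ[k,a₂,1,c₂] := ⟨0, 1, 0, 0⟩
  obtain ⟨w, hw, hβ⟩ : ∃ w : ℍ[k,a₁,1,c₁], reducedTrace w = 1 ∧
      reducedTrace (star w * x₁) - reducedTrace (star i₂ * x₂) ≠ 0 := by
    let i₁ : ℍ[k,a₁,1,c₁] := ⟨0, 1, 0, 0⟩
    have hi₁ : reducedTrace i₁ = 1 := by simp [reducedTrace, i₁]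
    by_cases hi : reducedTrace (star i₁ * x₁) - reducedTrace (star i₂ * x₂) = 0
    · refine ⟨i₁ + z, by rw [reducedTrace_add, hi₁, hz, add_zero], ?_⟩
      rwa [star_add, add_mul, reducedTrace_add, add_sub_right_comm, hi, zero_add]
    · exact ⟨i₁, hi₁, hi⟩
  -- As `x₁` and `x₂` have the same norm, the equation `nrd (w + l • x₁) = nrd (i₂ + l • x₂)` is
  -- linear in `l`.
  let l := (reducedNorm i₂ - reducedNorm w) /
    (reducedTrace (star w * x₁) - reducedTrace (star i₂ * x₂))
  have htrace : reducedTrace (w + l • x₁) = 1 := by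
    rw [reducedTrace_add, reducedTrace_smul, hw, ht₁, mul_zero, add_zero]
  have hy₁ : w + l • x₁ ∉ (⊥ : Subalgebra k ℍ[k,a₁,1,c₁]) := fun hmem => by
    obtain ⟨r, hr⟩ := Algebra.mem_bot.mp hmem
    rw [← hr] at htrace
    simp [reducedTrace, h2] at htrace
  refine ⟨w + l • x₁, i₂ + l • x₂, hy₁, reducedCharpoly_eq_iff.mpr ⟨?_, ?_⟩,
    (separable_reducedCharpoly_iff hy₁).mpr (.inr (htrace.trans_ne one_ne_zero))⟩
  · rw [htrace, reducedTrace_add, reducedTrace_smul, ← htr, ht₁, mul_zero, add_zero]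
    simp [reducedTrace, i₂]
  · have hl : l * (reducedTrace (star w * x₁) - reducedTrace (star i₂ * x₂)) =
        reducedNorm i₂ - reducedNorm w := div_mul_cancel₀ _ hβ
    simp only [reducedNorm_add, reducedNorm_smul, mul_smul_comm, reducedTrace_smul, hnrd]
    linear_combination hl

theorem isSeparable_adjoinRoot {p : k[X]} [Fact (Irreducible p)] (hsep : p.Separable) :
    Algebra.IsSeparable k (AdjoinRoot p) := by
  have hp : Irreducible p := Fact.out
  have hroot : IsSeparable k (AdjoinRoot.root p) := by
    rw [IsSeparable, AdjoinRoot.minpoly_root hp.ne_zero]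
    exact hsep.mul_unit (isUnit_C.mpr (by simp [hp.ne_zero]))
  have := IntermediateField.isSeparable_adjoin_simple_iff_isSeparable k (AdjoinRoot p) |>.mpr hroot
  rw [IntermediateField.adjoin_root_eq_top] at this
  exact .of_algHom k _ IntermediateField.topEquiv.symm.toAlgHom

theorem nonempty_adjoinRoot_algHom {p : k[X]} (hp : p ≠ 0) {A : Type*} [Ring A]
    [Algebra k A] {y : A} (hy : aeval y p = 0) : Nonempty (AdjoinRoot p →ₐ[k] A) :=
  ⟨(AdjoinRoot.powerBasis hp).lift y (by
    rw [AdjoinRoot.minpoly_powerBasis_gen hp, map_mul, hy, zero_mul])⟩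

theorem exists_separable_quadratic_field_of_reducedCharpoly_eq.{u} {k : Type u} [Field k]
    {a₁ c₁ a₂ c₂ : k} [NoZeroDivisors ℍ[k,a₁,1,c₁]]
    (h : ∃ (y₁ : ℍ[k,a₁,1,c₁]) (y₂ : ℍ[k,a₂,1,c₂]), y₁ ∉ (⊥ : Subalgebra k ℍ[k,a₁,1,c₁]) ∧
      reducedCharpoly y₁ = reducedCharpoly y₂ ∧ (reducedCharpoly y₁).Separable) :
    ∃ (F : Type u) (_ : Field F) (_ : Algebra k F), Algebra.IsSeparable k F ∧
      Module.finrank k F = 2 ∧ Nonempty (F →ₐ[k] ℍ[k,a₁,1,c₁]) ∧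
        Nonempty (F →ₐ[k] ℍ[k,a₂,1,c₂]) := by
  obtain ⟨y₁, y₂, hy₁, hy, hsep⟩ := h
  have hirr := irreducible_reducedCharpoly hy₁
  have := Fact.mk hirr
  refine ⟨AdjoinRoot (reducedCharpoly y₁), inferInstance, inferInstance,
    isSeparable_adjoinRoot hsep, ?_,
    nonempty_adjoinRoot_algHom hirr.ne_zero (aeval_reducedCharpoly y₁),
    nonempty_adjoinRoot_algHom hirr.ne_zero (hy ▸ aeval_reducedCharpoly y₂)⟩
  rw [(AdjoinRoot.powerBasis hirr.ne_zero).finrank, AdjoinRoot.powerBasis_dim,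
    natDegree_reducedCharpoly]

end SeparableQuadratic

theorem stmt5_general.{u} {k : Type u} {D₁ D₂ K K' : Type*} [Field k]
    [DivisionRing D₁] [DivisionRing D₂] [Algebra k D₁] [Algebra k D₂]
    [Algebra.IsCentral k D₁] [Algebra.IsCentral k D₂]
    (h₁ : Module.finrank k D₁ = 4) (h₂ : Module.finrank k D₂ = 4)
    [Field K] [Field K'] [Algebra k K] [Algebra k K'] [Algebra K K'] [IsScalarTower k K K']
    (hodd : Odd (Module.finrank k K)) (hKK' : Module.finrank K K' = 2)
    (hs₁ : Nonempty ((K' ⊗[k] D₁) ≃ₐ[K'] Matrix (Fin 2) (Fin 2) K'))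
    (hs₂ : Nonempty ((K' ⊗[k] D₂) ≃ₐ[K'] Matrix (Fin 2) (Fin 2) K')) :
    ∃ (F : Type u) (_ : Field F) (_ : Algebra k F),
      Algebra.IsSeparable k F ∧ Module.finrank k F = 2 ∧
      Nonempty ((F ⊗[k] D₁) ≃ₐ[F] Matrix (Fin 2) (Fin 2) F) ∧
      Nonempty ((F ⊗[k] D₂) ≃ₐ[F] Matrix (Fin 2) (Fin 2) F) := by
  have : FiniteDimensional k D₁ := .of_finrank_pos (by omega)
  have : FiniteDimensional k D₂ := .of_finrank_pos (by omega)
  obtain ⟨a₁, c₁, ⟨e₁⟩⟩ := exists_algEquiv_quaternionAlgebra h₁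
  obtain ⟨a₂, c₂, ⟨e₂⟩⟩ := exists_algEquiv_quaternionAlgebra h₂
  have : NoZeroDivisors ℍ[k,a₁,1,c₁] := e₁.toMulEquiv.noZeroDivisors
  have : NoZeroDivisors ℍ[k,a₂,1,c₂] := e₂.toMulEquiv.noZeroDivisors
  have := noZeroDivisors_quaternionAlgebra_of_odd_finrank hodd a₁ c₁
  have := noZeroDivisors_quaternionAlgebra_of_odd_finrank hodd a₂ c₂
  obtain ⟨φ₁⟩ := nonempty_algHom_quaternionAlgebra_of_splits hKK' e₁ hs₁
  obtain ⟨φ₂⟩ := nonempty_algHom_quaternionAlgebra_of_splits hKK' e₂ hs₂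
  have hK := exists_reducedCharpoly_eq_of_algHom (by omega) φ₁ φ₂
  have hk := exists_reducedCharpoly_eq_of_odd_finrank hodd hK
  obtain ⟨F, _, _, hsep, hF, ⟨ψ₁⟩, ⟨ψ₂⟩⟩ :=
    exists_separable_quadratic_field_of_reducedCharpoly_eq (exists_reducedCharpoly_eq_separable hk)
  exact ⟨F, inferInstance, inferInstance, hsep, hF,
    nonempty_algEquiv_matrix_of_algHom (e₁.toAlgHom.comp ψ₁) hF h₁,
    nonempty_algEquiv_matrix_of_algHom (e₂.toAlgHom.comp ψ₂) hF h₂⟩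

theorem stmt5 (k D₁ D₂ : Type) [Field k]
    [DivisionRing D₁] [DivisionRing D₂] [Algebra k D₁] [Algebra k D₂]
    [Algebra.IsCentral k D₁] [Algebra.IsCentral k D₂]
    (h1 : Module.finrank k D₁ = 4) (h2 : Module.finrank k D₂ = 4)
    (K K' : Type) [Field K] [Field K'] [Algebra k K] [Algebra k K']
    [Algebra K K'] [IsScalarTower k K K']
    [FiniteDimensional k K'] [Algebra.IsSeparable k K']
    (hodd : Odd (Module.finrank k K)) (hKK' : Module.finrank K K' = 2)
    (hs1 : Nonempty ((K' ⊗[k] D₁) ≃ₐ[K'] Matrix (Fin 2) (Fin 2) K'))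
    (hs2 : Nonempty ((K' ⊗[k] D₂) ≃ₐ[K'] Matrix (Fin 2) (Fin 2) K')) :
    ∃ (F : Type) (_ : Field F) (_ : Algebra k F),
      Algebra.IsSeparable k F ∧ Module.finrank k F = 2 ∧
      Nonempty ((F ⊗[k] D₁) ≃ₐ[F] Matrix (Fin 2) (Fin 2) F) ∧
      Nonempty ((F ⊗[k] D₂) ≃ₐ[F] Matrix (Fin 2) (Fin 2) F) :=
  stmt5_general h1 h2 hodd hKK' hs1 hs2
end

section
/- Let k ⊆ K ⊆ L be a tower of finite separable field extensions, let β ∈ Kˣ, and let F/k be a finite field extension of degree n. If the image β ⊗ 1 of β in (K ⊗_k F)ˣ is a norm from (L ⊗_k F)ˣ, then β^n ∈ N_{L/K}(Lˣ). -/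
open TensorProduct

/-- `β ∈ Kˣ` becomes a norm from `(L ⊗[k] F)ˣ` to `(K ⊗[k] F)ˣ`, where `L ⊗[k] F` is a
`(K ⊗[k] F)`-algebra via the map induced by the inclusion `K ⊆ L`. -/
def IsNormFrom (k K L F : Type) [Field k] [Field K] [Field L] [Field F]
    [Algebra k K] [Algebra k L] [Algebra K L] [IsScalarTower k K L] [Algebra k F]
    (β : K) : Prop :=
  letI : Algebra (K ⊗[k] F) (L ⊗[k] F) :=
    ((Algebra.TensorProduct.map (IsScalarTower.toAlgHom k K L) (AlgHom.id k F)).toRingHom).toAlgebra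
  ∃ x : (L ⊗[k] F)ˣ,
    Algebra.norm (K ⊗[k] F) (x : L ⊗[k] F) = (β : K) ⊗ₜ[k] (1 : F)

section CommSquare

variable {R S T A : Type*} [CommRing R] [CommRing S] [CommRing T] [Ring A]
  [Algebra R S] [Algebra R T] [Algebra R A] [Algebra S A] [Algebra T A]
  [IsScalarTower R S A] [IsScalarTower R T A]
  [Module.Free R S] [Module.Free R T] [Module.Free S A] [Module.Free T A]

theorem norm_norm_comm (x : A) :
    Algebra.norm R (Algebra.norm S x) = Algebra.norm R (Algebra.norm T x) := by
  rw [Algebra.norm_norm, Algebra.norm_norm]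

theorem norm_norm_eq_pow_finrank_of_norm_eq_algebraMap {x : A} {b : R}
    (hx : Algebra.norm T x = algebraMap R T b) :
    Algebra.norm R (Algebra.norm S x) = b ^ Module.finrank R T := by
  rw [norm_norm_comm (T := T), hx, Algebra.norm_algebraMap]

end CommSquare

section BaseChange

variable {k K L F : Type*} [CommRing k] [CommRing K] [CommRing L] [CommRing F]
  [Algebra k K] [Algebra k L] [Algebra K L] [IsScalarTower k K L] [Algebra k F]

/-- The `K ⊗[k] F`-algebra structure on `L ⊗[k] F` obtained from `K → L` by base change along
`k → F`. It is only a local instance: for `K = L` it is not definitionally `Algebra.id`. -/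
noncomputable abbrev baseChangeAlgebra : Algebra (K ⊗[k] F) (L ⊗[k] F) :=
  (Algebra.TensorProduct.map (IsScalarTower.toAlgHom k K L) (AlgHom.id k F)).toRingHom.toAlgebra

attribute [local instance] baseChangeAlgebra

theorem isScalarTower_baseChangeAlgebra : IsScalarTower K (K ⊗[k] F) (L ⊗[k] F) :=
  .of_algebraMap_eq fun x ↦ by
    simp [RingHom.algebraMap_toAlgebra, Algebra.TensorProduct.algebraMap_apply]

attribute [local instance] isScalarTower_baseChangeAlgebra

theorem isPushout_baseChangeAlgebra : Algebra.IsPushout K L (K ⊗[k] F) (L ⊗[k] F) :=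
  .tensorProduct_tensorProduct k F K L <| by ext; simp [RingHom.algebraMap_toAlgebra]

theorem free_baseChangeAlgebra [Module.Free K L] : Module.Free (K ⊗[k] F) (L ⊗[k] F) :=
  isPushout_baseChangeAlgebra.symm.out.free

theorem stmt8_general [Module.Free K L] [Module.Finite K L] [Module.Free k F] [Module.Finite k F]
    {x : L ⊗[k] F} {b : K} (hx : Algebra.norm (K ⊗[k] F) x = b ⊗ₜ[k] (1 : F)) :
    Algebra.norm K (Algebra.norm L x) = b ^ Module.finrank k F := by
  nontriviality K
  have : Nontrivial k := (algebraMap k K).domain_nontrivial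
  have : Module.Free (K ⊗[k] F) (L ⊗[k] F) := free_baseChangeAlgebra
  rw [norm_norm_eq_pow_finrank_of_norm_eq_algebraMap hx, Module.finrank_baseChange]

end BaseChange

theorem stmt8 (k K L : Type) [Field k] [Field K] [Field L]
    [Algebra k K] [Algebra k L] [Algebra K L] [IsScalarTower k K L]
    [FiniteDimensional k L] [Algebra.IsSeparable k L]
    (β : Kˣ)
    (F : Type) [Field F] [Algebra k F] [FiniteDimensional k F]
    (n : ℕ) (hn : Module.finrank k F = n)
    (h : IsNormFrom k K L F (β : K)) :
    ∃ x : Lˣ, Algebra.norm K (x : L) = (β : K) ^ n := by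
  have : FiniteDimensional K L := .right k K L
  obtain ⟨x, hx⟩ := h
  exact ⟨Units.map (Algebra.norm L) x, hn ▸ stmt8_general hx⟩
end

section
/- Let L/k be a finite Galois field extension with cyclic Galois group and let β ∈ kˣ. Then there exists a finite separable field extension F/k such that (i) β = N_{(L⊗_kF)/F}(x) for some unit x of L ⊗_k F, and (ii) for every finite separable field extension F'/k with β = N_{(L⊗_kF')/F'}(x') for some unit x' of L ⊗_k F', the degree [F:k] divides [F':k]. -/
open TensorProduct

/-- `β ∈ k` is a norm from `(L ⊗[k] F)ˣ` to `Fˣ`, where `L ⊗[k] F` is regarded as an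
`F`-algebra via the right tensor factor. -/
def IsBaseNorm (k L F : Type) [Field k] [Field L] [Field F]
    [Algebra k L] [Algebra k F] (β : k) : Prop :=
  letI : Algebra F (L ⊗[k] F) :=
    (Algebra.TensorProduct.includeRight (R := k) (A := L) (B := F)).toRingHom.toAlgebra
  ∃ x : (L ⊗[k] F)ˣ, Algebra.norm F (x : L ⊗[k] F) = algebraMap k F β

/-!
If `σ` generates `Gal(L/k)`, the norm of `c ∈ F ⊗[k] L` down to `F` is the product of the conjugates
`σ ^ j c`. An element `c` whose norm is `β` lets the generator `u` of the cyclic algebra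
`A = (L/k, σ, β)` act on `F ⊗[k] L` by `x ↦ c * σ x`, which splits `A` over `F`. Conversely, a
splitting representation of `A` over `F` is free of rank one over `F ⊗[k] L` on some vector `v`, and
`u v = c v` recovers such a `c`. So `β` is a norm after base change to `F` exactly when `F` splits
`A`.

Let `A` be any central simple `k`-algebra of degree `n`, with simple module `S`. If `F'` splits `A`,
then `A` acts on `F' ^ n`, which is a power of `S`, so `dim S` divides `n * [F' : k]`. Equality
`dim S = n * [F : k]` is attained by a maximal separable subfield `F` of the division algebra
`End_A S`: if the centralizer of `F` in it were larger than `F`, it would be noncommutative and, by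
the Jacobson-Noether theorem, contain a larger separable subfield. So the centralizer is `F`, and by
density `F ⊗[k] A` is all of `End_F S`.
-/

universe u

section CentralSimple

section Density

variable {F B S : Type*} [Field F] [Ring B] [Algebra F B] [AddCommGroup S] [Module F S]
  [Module B S] [IsScalarTower F B S] [FiniteDimensional F S] [IsSemisimpleModule B S]

theorem lsmul_surjective_of_moduleEnd_eq_bot (h : (⊥ : Subalgebra F (Module.End B S)) = ⊤) :
    Function.Surjective (Algebra.lsmul F F S : B →ₐ[F] Module.End F S) := by
  intro g
  have : Module.Finite (Module.End B S) S := .of_restrictScalars_finite F (Module.End B S) S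
  let g' : Module.End (Module.End B S) S :=
    { g with
      map_smul' := fun x s ↦ by
        obtain ⟨c, rfl⟩ := Algebra.mem_bot.1 (h ▸ Algebra.mem_top : x ∈ ⊥)
        exact map_smul g c s }
  obtain ⟨b, hb⟩ := Module.Finite.toModuleEnd_moduleEnd_surjective (R := B) g'
  exact ⟨b, LinearMap.ext fun s ↦ LinearMap.congr_fun hb s⟩

theorem isCentral_moduleEnd [FaithfulSMul B S] [Algebra.IsCentral F B] :
    Algebra.IsCentral F (Module.End B S) where
  out z hz := by
    have : Module.Finite (Module.End B S) S := .of_restrictScalars_finite F (Module.End B S) S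
    rw [Subalgebra.mem_center_iff] at hz
    let z' : Module.End (Module.End B S) S :=
      { z with map_smul' := fun g s ↦ LinearMap.congr_fun (hz g).symm s }
    obtain ⟨b, hb⟩ := Module.Finite.toModuleEnd_moduleEnd_surjective (R := B) z'
    have hbz (s : S) : b • s = z s := LinearMap.congr_fun hb s
    have hcenter : b ∈ Subalgebra.center F B := by
      refine Subalgebra.mem_center_iff.2 fun b' ↦ FaithfulSMul.eq_of_smul_eq_smul fun s : S ↦ ?_
      rw [mul_smul, mul_smul, hbz, hbz, map_smul]
    obtain ⟨f, rfl⟩ := Algebra.mem_bot.1 (Algebra.IsCentral.out hcenter)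
    refine Algebra.mem_bot.2 ⟨f, LinearMap.ext fun s ↦ ?_⟩
    rw [← hbz, algebraMap_smul, Module.algebraMap_end_apply]

end Density

theorem map_lTensor_mulLeftRight_eq_zero {k A K T : Type*} [Field k] [Ring A] [Algebra k A]
    [Ring K] [Algebra k K] [NonAssocSemiring T] (f : K ⊗[k] A →+* T) {x : K ⊗[k] A}
    (hx : f x = 0) (t : A ⊗[k] Aᵐᵒᵖ) : f ((AlgHom.mulLeftRight k A t).lTensor K x) = 0 := by
  induction t with
  | zero => simp
  | add s t hs ht =>
    simp only [map_add, LinearMap.lTensor_add, LinearMap.add_apply, hs, ht, add_zero]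
  | tmul a b =>
    have : (AlgHom.mulLeftRight k A (a ⊗ₜ b)).lTensor K x = (1 ⊗ₜ a) * x * (1 ⊗ₜ b.unop) := by
      clear hx
      induction x with
      | zero => simp
      | add x y hx hy => rw [map_add, hx, hy, mul_add, add_mul]
      | tmul c y => simp
    rw [this, map_mul, map_mul, hx, mul_zero, zero_mul]

variable (k A : Type*) [Field k] [Ring A] [Algebra k A] [Algebra.IsCentral k A] [IsSimpleRing A]

theorem mulLeftRight_surjective [FiniteDimensional k A] :
    Function.Surjective (AlgHom.mulLeftRight k A) := by
  let : Module (A ⊗[k] Aᵐᵒᵖ) A := Module.compHom A (AlgHom.mulLeftRight k A).toRingHom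
  have tmul_smul (a : A) (b : Aᵐᵒᵖ) (x : A) : (a ⊗ₜ[k] b) • x = a * x * b.unop :=
    AlgHom.mulLeftRight_apply ..
  have : IsScalarTower k (A ⊗[k] Aᵐᵒᵖ) A :=
    ⟨fun c t x ↦ LinearMap.congr_fun (map_smul (AlgHom.mulLeftRight k A) c t) x⟩
  have : IsSimpleModule (A ⊗[k] Aᵐᵒᵖ) A :=
    { eq_bot_or_eq_top := fun N ↦ by
        let I : TwoSidedIdeal A := .mk' N N.zero_mem N.add_mem N.neg_mem
          (fun {a x} hx ↦ by simpa [tmul_smul] using N.smul_mem (a ⊗ₜ 1) hx)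
          (fun {x b} hx ↦ by simpa [tmul_smul] using N.smul_mem (1 ⊗ₜ .op b) hx)
        have hI (x : A) : x ∈ I ↔ x ∈ N := by simp [I]
        refine (eq_bot_or_eq_top I).imp (fun h ↦ ?_) fun h ↦ ?_
        all_goals ext x; simp [← hI, h] }
  have hend : (⊥ : Subalgebra k (Module.End (A ⊗[k] Aᵐᵒᵖ) A)) = ⊤ := by
    refine (eq_top_iff.2 fun g _ ↦ ?_)
    have hleft (x : A) : g x = x * g 1 := by
      simpa [tmul_smul] using map_smul g (x ⊗ₜ[k] (1 : Aᵐᵒᵖ)) 1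
    have hright (x : A) : g x = g 1 * x := by
      simpa [tmul_smul] using map_smul g ((1 : A) ⊗ₜ[k] MulOpposite.op x) 1
    have hcenter : g 1 ∈ Subalgebra.center k A :=
      Subalgebra.mem_center_iff.2 fun x ↦ (hleft x).symm.trans (hright x)
    obtain ⟨c, hc⟩ := Algebra.mem_bot.1 (Algebra.IsCentral.out hcenter)
    refine Algebra.mem_bot.2 ⟨c, LinearMap.ext fun x ↦ ?_⟩
    rw [hright, ← hc, ← Algebra.smul_def, Module.algebraMap_end_apply]
  intro g
  obtain ⟨t, ht⟩ := lsmul_surjective_of_moduleEnd_eq_bot hend g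
  exact ⟨t, LinearMap.ext fun x ↦ LinearMap.congr_fun ht x⟩

instance isSimpleRing_tensorProduct (K : Type*) [Ring K] [Algebra k K] [IsSimpleRing K]
    [FiniteDimensional k A] : IsSimpleRing (K ⊗[k] A) := by
  rw [IsSimpleRing.iff_injective_ringHom]
  intro T _ _ f
  refine (injective_iff_map_eq_zero f).2 fun x hx ↦ ?_
  -- `A ⊗ Aᵐᵒᵖ` acts on `A` through all `k`-linear maps, in particular through the coordinates of a
  -- basis, so every coordinate of `x` in `K` is killed by `f`.
  let b := Module.finBasis k A
  have hf : Function.Injective (f.comp Algebra.TensorProduct.includeLeftRingHom) :=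
    RingHom.injective _
  refine (Algebra.TensorProduct.basis K b).ext_elem fun i ↦ hf ?_
  obtain ⟨t, ht⟩ := mulLeftRight_surjective k A ((b.coord i).smulRight 1)
  have := map_lTensor_mulLeftRight_eq_zero f hx t
  rw [ht] at this
  have hcoord : ((b.coord i).smulRight (1 : A)).lTensor K x =
      (Algebra.TensorProduct.basis K b).repr x i ⊗ₜ 1 := by
    clear hx this
    induction x with
    | zero => simp
    | add x y hx hy => simp [hx, hy, TensorProduct.add_tmul]
    | tmul c y => simp [TensorProduct.smul_tmul', ← Algebra.commutes, ← Algebra.smul_def]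
  simpa [hcoord] using this

instance isCentral_baseChange (F : Type*) [Field F] [Algebra k F] :
    Algebra.IsCentral F (F ⊗[k] A) where
  out z hz := by
    have hz' : z ∈ Subalgebra.centralizer k
        (Algebra.TensorProduct.includeRight : A →ₐ[k] F ⊗[k] A).range := by
      rw [Subalgebra.mem_centralizer_iff]
      exact fun a _ ↦ Subalgebra.mem_center_iff.1 hz a
    rw [Subalgebra.centralizer_range_includeRight_eq_center_tensorProduct] at hz'
    obtain ⟨y, rfl⟩ := hz'
    clear hz
    induction y with
    | zero => simp
    | add x y hx hy => rw [map_add]; exact add_mem hx hy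
    | tmul f c =>
      obtain ⟨r, hr⟩ := Algebra.mem_bot.1 (Algebra.IsCentral.out c.2)
      refine Algebra.mem_bot.2 ⟨r • f, ?_⟩
      simp [← hr, Algebra.algebraMap_eq_smul_one, Algebra.TensorProduct.one_def,
        TensorProduct.smul_tmul']

end CentralSimple

section Index

theorem finrank_dvd_finrank_of_isSimpleModule {k A S M : Type*} [Field k] [Ring A] [Algebra k A]
    [IsSimpleRing A] [IsArtinianRing A] [AddCommGroup S] [Module k S] [Module A S]
    [IsScalarTower k A S] [IsSimpleModule A S] [FiniteDimensional k S] [AddCommGroup M]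
    [Module k M] [Module A M] [IsScalarTower k A M] [FiniteDimensional k M] :
    Module.finrank k S ∣ Module.finrank k M := by
  have hM : IsIsotypicOfType A M S := fun N _ ↦ by
    obtain ⟨I, ⟨eS⟩⟩ := IsSemisimpleRing.exists_linearEquiv_ideal_of_isSimpleModule A S
    obtain ⟨J, ⟨eN⟩⟩ := IsSemisimpleRing.exists_linearEquiv_ideal_of_isSimpleModule A N
    have := IsSimpleModule.congr eS.symm
    have := IsSimpleModule.congr eN.symm
    obtain ⟨f⟩ := IsSimpleRing.isIsotypic A A I J
    exact ⟨eN.trans (f.trans eS.symm)⟩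
  have : Module.Finite A M := .of_restrictScalars_finite k A M
  obtain ⟨r, ⟨e⟩⟩ := hM.linearEquiv_fun
  rw [(e.restrictScalars k).finrank_eq, Module.finrank_pi_fintype]
  simp

theorem finrank_eq_sq_or_exists_isSeparable {F B S : Type*} [Field F] [Ring B] [Algebra F B]
    [IsSimpleRing B] [Algebra.IsCentral F B] [AddCommGroup S] [Module F S] [Module B S]
    [IsScalarTower F B S] [FiniteDimensional F S] [IsSimpleModule B S] :
    Module.finrank F B = Module.finrank F S ^ 2 ∨
      ∃ x : Module.End B S, x ∉ (algebraMap F (Module.End B S)).range ∧ IsSeparable F x := by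
  classical
  have : Nontrivial S := IsSimpleModule.nontrivial B S
  have hinj : Function.Injective (Algebra.lsmul F F S : B →ₐ[F] Module.End F S) :=
    RingHom.injective _
  have : FaithfulSMul B S := ⟨fun h ↦ hinj (LinearMap.ext h)⟩
  have : Module.Finite F (Module.End B S) :=
    .of_injective (LinearMap.restrictScalarsₗ F B S S F) (LinearMap.restrictScalars_injective F)
  have := isCentral_moduleEnd (F := F) (B := B) (S := S)
  by_cases hend : (⊥ : Subalgebra F (Module.End B S)) = ⊤
  · left
    rw [sq, ← Module.finrank_linearMap F F S S]
    exact (AlgEquiv.ofBijective _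
      ⟨hinj, lsmul_surjective_of_moduleEnd_eq_bot hend⟩).toLinearEquiv.finrank_eq
  · exact .inr (JacobsonNoether.exists_separable_and_not_isCentral' hend)

theorem exists_finrank_lt_of_isSeparable {k E : Type*} {F : Type u} [Field k] [Field F]
    [Algebra k F] [FiniteDimensional k F] [Algebra.IsSeparable k F] [Ring E] [IsDomain E]
    [Algebra k E] [Algebra F E] [IsScalarTower k F E] {x : E} (hx : IsSeparable F x)
    (hxF : x ∉ (algebraMap F E).range) :
    ∃ (K : Type u) (_ : Field K) (_ : Algebra k K), FiniteDimensional k K ∧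
      Algebra.IsSeparable k K ∧ Nonempty (K →ₐ[k] E) ∧
      Module.finrank k F < Module.finrank k K := by
  have hint : IsIntegral F x := hx.isIntegral
  have : Fact (Irreducible (minpoly F x)) := ⟨minpoly.irreducible hint⟩
  let pb := AdjoinRoot.powerBasis (minpoly.ne_zero hint)
  have : FiniteDimensional F (AdjoinRoot (minpoly F x)) := pb.finite
  have : Algebra.IsSeparable F (AdjoinRoot (minpoly F x)) := by
    have hroot : IsSeparable F (AdjoinRoot.root (minpoly F x)) :=
      Polynomial.Separable.of_dvd hx (minpoly.dvd F _ (by simp))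
    have htop : IntermediateField.adjoin F {AdjoinRoot.root (minpoly F x)} = ⊤ :=
      IntermediateField.adjoin_eq_top_of_algebra _ _ AdjoinRoot.adjoinRoot_eq_top
    rw [← IntermediateField.isSeparable_adjoin_simple_iff_isSeparable, htop] at hroot
    exact .of_algHom F _ IntermediateField.topEquiv.symm.toAlgHom
  let ψ : AdjoinRoot (minpoly F x) →ₐ[F] E :=
    Ideal.Quotient.liftₐ _ (Polynomial.aeval x) fun p hp ↦ by
      obtain ⟨q, rfl⟩ := Ideal.mem_span_singleton.1 hp
      simp
  refine ⟨AdjoinRoot (minpoly F x), inferInstance, inferInstance,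
    FiniteDimensional.trans k F _, .trans k F _, ⟨ψ.restrictScalars k⟩, ?_⟩
  rw [← Module.finrank_mul_finrank k F (AdjoinRoot _), pb.finrank]
  exact lt_mul_of_one_lt_right Module.finrank_pos
    (Nat.lt_of_succ_le ((minpoly.two_le_natDegree_iff hint).2 hxF))

attribute [local instance] TensorProduct.Algebra.module in
theorem finrank_eq_sq_or_exists_finrank_lt {k A S : Type*} {F : Type u} [Field k] [Ring A]
    [Algebra k A] [Algebra.IsCentral k A] [IsSimpleRing A] [FiniteDimensional k A]
    [AddCommGroup S] [Module k S] [Module A S] [IsScalarTower k A S] [FiniteDimensional k S]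
    [IsSimpleModule A S] [Field F] [Algebra k F] [FiniteDimensional k F] [Algebra.IsSeparable k F]
    [Module F S] [IsScalarTower k F S] [SMulCommClass F A S] :
    Module.finrank k A = Module.finrank F S ^ 2 ∨
      ∃ (K : Type u) (_ : Field K) (_ : Algebra k K), FiniteDimensional k K ∧
        Algebra.IsSeparable k K ∧ Nonempty (K →ₐ[k] Module.End A S) ∧
        Module.finrank k F < Module.finrank k K := by
  classical
  have tmul_smul (f : F) (a : A) (s : S) : (f ⊗ₜ[k] a) • s = f • a • s :=
    TensorProduct.Algebra.smul_def f a s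
  have : IsScalarTower F (F ⊗[k] A) S := .of_algebraMap_smul fun f s ↦ by
    rw [Algebra.TensorProduct.algebraMap_apply, tmul_smul, one_smul, Algebra.algebraMap_self_apply]
  have : IsScalarTower k (F ⊗[k] A) S := .of_algebraMap_smul fun c s ↦ by
    rw [IsScalarTower.algebraMap_apply k F, algebraMap_smul, algebraMap_smul]
  have : LinearMap.CompatibleSMul S S A (F ⊗[k] A) :=
    ⟨fun g a s ↦ by simpa [tmul_smul] using map_smul g ((1 : F) ⊗ₜ[k] a) s⟩
  have : FiniteDimensional F S := .of_restrictScalars_finite k F S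
  have : Nontrivial S := IsSimpleModule.nontrivial A S
  have : IsSimpleModule (F ⊗[k] A) S :=
    { eq_bot_or_eq_top := fun N ↦ by
        let N' : Submodule A S :=
          { N with smul_mem' := fun a s hs ↦ by simpa [tmul_smul] using N.smul_mem (1 ⊗ₜ a) hs }
        have hN (s : S) : s ∈ N' ↔ s ∈ N := .rfl
        refine (eq_bot_or_eq_top N').imp (fun h ↦ ?_) fun h ↦ ?_
        all_goals ext s; simp [← hN, h] }
  obtain hdim | ⟨x, hxF, hx⟩ :=
    finrank_eq_sq_or_exists_isSeparable (F := F) (B := F ⊗[k] A) (S := S)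
  · rw [Module.finrank_baseChange] at hdim
    exact .inl hdim
  · obtain ⟨K, _, _, hfin, hsep, ⟨ψ⟩, hlt⟩ := exists_finrank_lt_of_isSeparable (k := k) hx hxF
    let ρ : Module.End (F ⊗[k] A) S →ₐ[k] Module.End A S := .ofLinearMap
      (LinearMap.restrictScalarsₗ A (F ⊗[k] A) S S k) rfl fun _ _ ↦ rfl
    exact .inr ⟨K, _, _, hfin, hsep, ⟨ρ.comp ψ⟩, hlt⟩

theorem exists_separable_algHom_finrank_le (k : Type u) (D : Type*) [Field k] [Ring D]
    [Nontrivial D] [Algebra k D] [FiniteDimensional k D] :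
    ∃ (F : Type u) (_ : Field F) (_ : Algebra k F), FiniteDimensional k F ∧
      Algebra.IsSeparable k F ∧ Nonempty (F →ₐ[k] D) ∧
      ∀ (K : Type u) (_ : Field K) (_ : Algebra k K), FiniteDimensional k K →
        Algebra.IsSeparable k K → Nonempty (K →ₐ[k] D) →
        Module.finrank k K ≤ Module.finrank k F := by
  let degrees : Set ℕ := {d | ∃ (F : Type u) (_ : Field F) (_ : Algebra k F),
    FiniteDimensional k F ∧ Algebra.IsSeparable k F ∧ Nonempty (F →ₐ[k] D) ∧
    Module.finrank k F = d}
  have hne : degrees.Nonempty :=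
    ⟨_, k, inferInstance, inferInstance, inferInstance, inferInstance, ⟨Algebra.ofId k D⟩, rfl⟩
  have hbdd : BddAbove degrees := by
    refine ⟨Module.finrank k D, ?_⟩
    rintro _ ⟨F, _, _, _, _, ⟨φ⟩, rfl⟩
    exact LinearMap.finrank_le_finrank_of_injective (f := φ.toLinearMap) φ.toRingHom.injective
  obtain ⟨F, _, _, hfin, hsep, hφ, hF⟩ := Nat.sSup_mem hne hbdd
  exact ⟨F, _, _, hfin, hsep, hφ, fun K _ _ hKfin hKsep hK ↦
    (le_csSup hbdd ⟨K, _, _, hKfin, hKsep, hK, rfl⟩).trans_eq hF.symm⟩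

/-- The `k`-algebra `A` is split by the extension `F` of `k`: it becomes a matrix algebra after
extending scalars to `F`. -/
def SplitsOver (k A F : Type*) [Field k] [Ring A] [Algebra k A] [Field F] [Algebra k F] : Prop :=
  ∃ n, Nonempty (F ⊗[k] A ≃ₐ[F] Matrix (Fin n) (Fin n) F)

namespace SplitsOver

variable {k A F : Type*} [Field k] [Ring A] [Algebra k A] [Field F] [Algebra k F]

theorem of_algHom [Algebra.IsCentral k A] [IsSimpleRing A] [FiniteDimensional k A] {V : Type*}
    [AddCommGroup V] [Module k V] [Module F V] [IsScalarTower k F V]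
    (ρ : A →ₐ[k] Module.End F V) (h : Module.finrank k A = Module.finrank F V ^ 2) :
    SplitsOver k A F := by
  have hpos : 0 < Module.finrank F V :=
    (Nat.pow_pos_iff.1 (h ▸ Module.finrank_pos)).resolve_right two_ne_zero
  have : FiniteDimensional F V := .of_finrank_pos hpos
  have : Nontrivial V := Module.nontrivial_of_finrank_pos hpos
  let Φ : F ⊗[k] A →ₐ[F] Module.End F V := AlgHom.liftEquiv k F A (Module.End F V) ρ
  have hbij : Function.Bijective Φ := by
    have hinj : Function.Injective Φ := RingHom.injective _
    refine ⟨hinj, (LinearMap.injective_iff_surjective_of_finrank_eq_finrank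
      (f := Φ.toLinearMap) ?_).1 hinj⟩
    rw [Module.finrank_baseChange, h, Module.finrank_linearMap, sq]
  exact ⟨_, ⟨(AlgEquiv.ofBijective Φ hbij).trans (algEquivMatrix (Module.finBasis F V))⟩⟩

theorem exists_algHom {n : ℕ} (h : SplitsOver k A F) (hn : Module.finrank k A = n ^ 2) :
    Nonempty (A →ₐ[k] Module.End F (Fin n → F)) := by
  obtain ⟨m, ⟨e⟩⟩ := h
  obtain rfl : n = m := by
    have := e.toLinearEquiv.finrank_eq
    rw [Module.finrank_baseChange, hn, Module.finrank_matrix, Fintype.card_fin,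
      Module.finrank_self, mul_one, ← sq] at this
    exact Nat.pow_left_injective two_ne_zero this
  exact ⟨(((e.trans Matrix.toLinAlgEquiv').toAlgHom).restrictScalars k).comp
    Algebra.TensorProduct.includeRight⟩

end SplitsOver

theorem exists_separable_splitsOver_finrank_mul {k : Type u} {A S : Type*} [Field k] [Ring A]
    [Algebra k A] [Algebra.IsCentral k A] [IsSimpleRing A] [FiniteDimensional k A]
    [AddCommGroup S] [Module k S] [Module A S] [IsScalarTower k A S] [FiniteDimensional k S]
    [IsSimpleModule A S] {n : ℕ} (hn : Module.finrank k A = n ^ 2) :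
    ∃ (F : Type u) (_ : Field F) (_ : Algebra k F), FiniteDimensional k F ∧
      Algebra.IsSeparable k F ∧ SplitsOver k A F ∧
      Module.finrank k F * n = Module.finrank k S := by
  classical
  have : Module.Finite k (Module.End A S) :=
    .of_injective (LinearMap.restrictScalarsₗ k A S S k) (LinearMap.restrictScalars_injective k)
  obtain ⟨F, _, _, hfin, hsep, ⟨φ⟩, hmax⟩ := exists_separable_algHom_finrank_le k (Module.End A S)
  let : Module F S := Module.compHom S φ.toRingHom
  have hsmul (f : F) (s : S) : f • s = φ f s := rfl
  have : IsScalarTower k F S := ⟨fun c f s ↦ by rw [hsmul, map_smul, hsmul, LinearMap.smul_apply]⟩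
  have : SMulCommClass F A S := ⟨fun f a s ↦ by simp [hsmul]⟩
  have := SMulCommClass.symm F A S
  obtain hS | ⟨K, _, _, hKfin, hKsep, hK, hlt⟩ :=
    finrank_eq_sq_or_exists_finrank_lt (k := k) (A := A) (S := S) (F := F)
  · refine ⟨F, _, _, hfin, hsep, .of_algHom (Algebra.lsmul k F S) hS, ?_⟩
    rw [Nat.pow_left_injective two_ne_zero (hn.symm.trans hS), Module.finrank_mul_finrank]
  · exact absurd (hmax K _ _ hKfin hKsep hK) hlt.not_ge

theorem SplitsOver.finrank_dvd {k A S F : Type*} [Field k] [Ring A] [Algebra k A] [IsSimpleRing A]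
    [IsArtinianRing A] [AddCommGroup S] [Module k S] [Module A S] [IsScalarTower k A S]
    [FiniteDimensional k S] [IsSimpleModule A S] [Field F] [Algebra k F] [FiniteDimensional k F]
    {n : ℕ} (hn : Module.finrank k A = n ^ 2) (h : SplitsOver k A F) :
    Module.finrank k S ∣ Module.finrank k F * n := by
  obtain ⟨ρ⟩ := h.exists_algHom hn
  let : Module A (Fin n → F) := Module.compHom _ ρ.toRingHom
  have : IsScalarTower k A (Fin n → F) :=
    ⟨fun c a v ↦ LinearMap.congr_fun (map_smul ρ c a) v⟩
  have hdvd := finrank_dvd_finrank_of_isSimpleModule (k := k) (A := A) (S := S) (M := Fin n → F)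
  rwa [Module.finrank_pi_fintype, Finset.sum_const, Finset.card_univ, Fintype.card_fin,
    smul_eq_mul, mul_comm] at hdvd

theorem exists_separable_splitsOver_finrank_dvd {k : Type u} {A : Type*} [Field k] [Ring A]
    [Algebra k A] [Algebra.IsCentral k A] [IsSimpleRing A] [FiniteDimensional k A] {n : ℕ}
    (hn : Module.finrank k A = n ^ 2) :
    ∃ (F : Type u) (_ : Field F) (_ : Algebra k F), FiniteDimensional k F ∧
      Algebra.IsSeparable k F ∧ SplitsOver k A F ∧
      ∀ (F' : Type u) (_ : Field F') (_ : Algebra k F'), FiniteDimensional k F' →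
        SplitsOver k A F' → Module.finrank k F ∣ Module.finrank k F' := by
  have : IsArtinianRing A := .of_finite k A
  obtain ⟨S, hS⟩ := IsAtomic.exists_atom (Ideal A)
  have : IsSimpleModule A S := isSimpleModule_iff_isAtom.2 hS
  have : FiniteDimensional k S :=
    .of_injective (S.subtype.restrictScalars k) Subtype.val_injective
  obtain ⟨F, _, _, hfin, hsep, hF, hdeg⟩ :=
    exists_separable_splitsOver_finrank_mul (S := S) hn
  refine ⟨F, _, _, hfin, hsep, hF, fun F' _ _ _ hF' ↦ ?_⟩
  have hpos : 0 < n :=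
    (Nat.pow_pos_iff.1 (hn ▸ Module.finrank_pos)).resolve_right two_ne_zero
  exact Nat.dvd_of_mul_dvd_mul_right hpos (hdeg ▸ hF'.finrank_dvd (S := S) hn)

end Index

theorem isSimpleRing_of_forall_injective {R : Type u} [Ring R] [Nontrivial R]
    (h : ∀ (T : Type u) [Ring T] [Nontrivial T] (f : R →+* T), Function.Injective f) :
    IsSimpleRing R :=
  .of_eq_bot_or_eq_top fun I ↦ or_iff_not_imp_right.2 fun hI ↦ by
    have : Nontrivial I.ringCon.Quotient :=
      nontrivial_of_ne 1 0 fun h1 ↦ hI (I.one_mem_iff.1 ((I.mem_iff 1).2 (Quotient.eq'.1 h1)))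
    rw [← I.ker_ringCon_mk', TwoSidedIdeal.ker_eq_bot]
    exact h _ _

section DedekindIndependence

theorem eq_zero_of_sum_monoidHom_smul_eq_zero {J G L M : Type*} [Monoid G] [Field L]
    [AddCommGroup M] [Module L M] [Fintype J] {τ : J → G →* L} (hτ : Function.Injective τ)
    {m : J → M} (hm : ∀ g, ∑ j, τ j g • m j = 0) (j : J) : m j = 0 := by
  refine (Module.forall_dual_apply_eq_zero_iff L (m j)).1 fun φ ↦ ?_
  refine Fintype.linearIndependent_iff.1 ((linearIndependent_monoidHom G L).comp τ hτ)
    (fun i ↦ φ (m i)) (funext fun g ↦ ?_) j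
  simpa [mul_comm] using congrArg φ (hm g)

variable {k L B : Type*} [Field k] [Field L] [Algebra k L] [Ring B] {σ : L ≃ₐ[k] L}
  {ι : L →+* B} {u : B}

theorem pow_mul_of_mul_eq (h : ∀ l, u * ι l = ι (σ l) * u) (i : ℕ) (l : L) :
    u ^ i * ι l = ι ((σ ^ i) l) * u ^ i := by
  induction i with
  | zero => simp
  | succ i ih => rw [pow_succ', mul_assoc, ih, ← mul_assoc, h, mul_assoc, pow_succ' σ]; rfl

theorem eq_zero_of_sum_mul_pow_eq_zero [Nontrivial B] (h : ∀ l, u * ι l = ι (σ l) * u)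
    (hu : IsUnit u) {x : Fin (orderOf σ) → L} (hx : ∑ i, ι (x i) * u ^ (i : ℕ) = 0) : x = 0 := by
  let : Module L B := Module.compHom B ι
  have hsmul (l : L) (b : B) : l • b = ι l * b := rfl
  let τ (i : Fin (orderOf σ)) : L →* L := (σ ^ (i : ℕ) : L ≃ₐ[k] L)
  have hτ : Function.Injective τ := fun i j hij ↦
    Fin.ext (pow_injOn_Iio_orderOf i.2 j.2 (AlgEquiv.ext fun l ↦ DFunLike.congr_fun hij l))
  -- Multiplying the relation by `ι l` on the right scales its `i`-th term by the character `σ ^ i`.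
  have hzero := eq_zero_of_sum_monoidHom_smul_eq_zero hτ (m := fun i ↦ ι (x i) * u ^ (i : ℕ))
    fun l ↦ by
      rw [← zero_mul (ι l), ← hx, Finset.sum_mul]
      refine Finset.sum_congr rfl fun i _ ↦ ?_
      rw [mul_assoc, pow_mul_of_mul_eq h, ← mul_assoc, ← map_mul, hsmul, ← mul_assoc, ← map_mul,
        mul_comm (x i)]
      rfl
  ext i
  exact (map_eq_zero ι).1 ((hu.pow i).mul_left_eq_zero.1 (hzero i))

end DedekindIndependence

section BaseChangeAut

variable {k L : Type*} [Field k] [Field L] [Algebra k L]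

/-- The action of the automorphisms of `L/k` on `F ⊗[k] L` through the second factor. -/
noncomputable def baseChangeAut (F : Type*) [CommRing F] [Algebra k F] :
    (L ≃ₐ[k] L) →* (F ⊗[k] L →ₐ[F] F ⊗[k] L) where
  toFun σ := Algebra.TensorProduct.map (.id F F) σ
  map_one' := by ext; simp
  map_mul' σ τ := by ext; simp

variable {F : Type*} [CommRing F] [Algebra k F] (σ : L ≃ₐ[k] L)

@[simp]
theorem baseChangeAut_tmul (x : F) (l : L) : baseChangeAut F σ (x ⊗ₜ l) = x ⊗ₜ σ l := by
  simp [baseChangeAut]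

/-- The twisted multiplication `x ↦ c * σ x` on `F ⊗[k] L`. -/
noncomputable def twistedMul (c : F ⊗[k] L) : Module.End F (F ⊗[k] L) :=
  Algebra.lmul F _ c * (baseChangeAut F σ).toLinearMap

@[simp]
theorem twistedMul_apply (c x : F ⊗[k] L) : twistedMul σ c x = c * baseChangeAut F σ x := rfl

theorem twistedMul_pow_apply (c : F ⊗[k] L) (i : ℕ) (x : F ⊗[k] L) :
    (twistedMul σ c ^ i) x =
      (∏ j ∈ Finset.range i, baseChangeAut F (σ ^ j) c) * baseChangeAut F (σ ^ i) x := by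
  induction i generalizing x with
  | zero => simp
  | succ i ih =>
    rw [pow_succ, Module.End.mul_apply, ih, twistedMul_apply, Finset.prod_range_succ, map_mul,
      mul_assoc, pow_succ, map_mul, AlgHom.mul_apply]

end BaseChangeAut

section CyclicAlgebra

variable {k L : Type*} [Field k] [Field L] [Algebra k L]

/-- The defining relations of the cyclic algebra `(L/k, σ, β)`, on the free algebra generated by
the elements of `L` and one further generator `none`. -/
inductive CyclicAlgebra.Rel (σ : L ≃ₐ[k] L) (β : k) :
    FreeAlgebra k (Option L) → FreeAlgebra k (Option L) → Prop
  | add (x y : L) : Rel σ β (FreeAlgebra.ι k (some (x + y)))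
      (FreeAlgebra.ι k (some x) + FreeAlgebra.ι k (some y))
  | mul (x y : L) : Rel σ β (FreeAlgebra.ι k (some (x * y)))
      (FreeAlgebra.ι k (some x) * FreeAlgebra.ι k (some y))
  | algebraMap (r : k) : Rel σ β (FreeAlgebra.ι k (some (algebraMap k L r)))
      (algebraMap k (FreeAlgebra k (Option L)) r)
  | gen_mul (l : L) : Rel σ β (FreeAlgebra.ι k none * FreeAlgebra.ι k (some l))
      (FreeAlgebra.ι k (some (σ l)) * FreeAlgebra.ι k none)
  | gen_pow : Rel σ β (FreeAlgebra.ι k none ^ orderOf σ)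
      (algebraMap k (FreeAlgebra k (Option L)) β)

/-- The cyclic algebra `(L/k, σ, β)`: the `k`-algebra generated by `L` and an element `u` subject
to `u * l = σ l * u` for `l ∈ L` and `u ^ orderOf σ = β`. -/
abbrev CyclicAlgebra (σ : L ≃ₐ[k] L) (β : k) : Type _ :=
  RingQuot (CyclicAlgebra.Rel σ β)

namespace CyclicAlgebra

variable (σ : L ≃ₐ[k] L) (β : k)

/-- The quotient map from the free algebra. -/
noncomputable abbrev mk : FreeAlgebra k (Option L) →ₐ[k] CyclicAlgebra σ β :=
  RingQuot.mkAlgHom k (Rel σ β)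

/-- The inclusion of `L` into the cyclic algebra. -/
noncomputable def ofField : L →ₐ[k] CyclicAlgebra σ β :=
  have hr (r : k) : mk σ β (FreeAlgebra.ι k (some (algebraMap k L r))) = algebraMap k _ r :=
    (RingQuot.mkAlgHom_rel k (Rel.algebraMap r)).trans (AlgHom.commutes _ r)
  { toFun := fun l ↦ mk σ β (FreeAlgebra.ι k (some l))
    map_one' := by simpa using hr 1
    map_zero' := by simpa using hr 0
    map_add' := fun x y ↦ (RingQuot.mkAlgHom_rel k (Rel.add x y)).trans (map_add _ _ _)
    map_mul' := fun x y ↦ (RingQuot.mkAlgHom_rel k (Rel.mul x y)).trans (map_mul _ _ _)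
    commutes' := hr }

/-- The generator `u` of the cyclic algebra, inducing `σ` on `L` by conjugation. -/
noncomputable def gen : CyclicAlgebra σ β :=
  mk σ β (FreeAlgebra.ι k none)

theorem gen_mul_ofField (l : L) : gen σ β * ofField σ β l = ofField σ β (σ l) * gen σ β :=
  (map_mul _ _ _).symm.trans ((RingQuot.mkAlgHom_rel k (Rel.gen_mul l)).trans (map_mul _ _ _))

theorem gen_pow_mul_ofField (i : ℕ) (l : L) :
    gen σ β ^ i * ofField σ β l = ofField σ β ((σ ^ i) l) * gen σ β ^ i :=
  pow_mul_of_mul_eq (ι := (ofField σ β).toRingHom) (gen_mul_ofField σ β) i l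

theorem gen_pow_orderOf : gen σ β ^ orderOf σ = algebraMap k _ β :=
  (map_pow _ _ _).symm.trans ((RingQuot.mkAlgHom_rel k Rel.gen_pow).trans (AlgHom.commutes _ β))

theorem adjoin_eq_top :
    Algebra.adjoin k (insert (gen σ β) (Set.range (ofField σ β))) = ⊤ := by
  have h : insert (gen σ β) (Set.range (ofField σ β)) = mk σ β '' Set.range (FreeAlgebra.ι k) := by
    ext x
    simp [Option.exists, ofField, gen, eq_comm]
  rw [h, ← AlgHom.map_adjoin, FreeAlgebra.adjoin_range_ι, Algebra.map_top, AlgHom.range_eq_top]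
  exact RingQuot.mkAlgHom_surjective k _

variable {σ β} in
/-- The universal property of the cyclic algebra. -/
noncomputable def lift {B : Type*} [Ring B] [Algebra k B] (ι : L →ₐ[k] B) (u : B)
    (hmul : ∀ l, u * ι l = ι (σ l) * u) (hpow : u ^ orderOf σ = algebraMap k B β) :
    CyclicAlgebra σ β →ₐ[k] B :=
  RingQuot.liftAlgHom k ⟨FreeAlgebra.lift k fun o ↦ o.elim u ι, by
    rintro _ _ (⟨x, y⟩ | ⟨x, y⟩ | r | l | _)
    · simp
    · simp
    · simp
    · simpa using hmul l
    · simpa using hpow⟩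

variable {σ β} in
/-- The representation of the cyclic algebra on `F ⊗[k] L` in which `L` acts by multiplication
and the generator by `x ↦ c * σ x`. -/
noncomputable def twistedRep {F : Type*} [CommRing F] [Algebra k F] (c : F ⊗[k] L)
    (hc : ∏ j ∈ Finset.range (orderOf σ), baseChangeAut F (σ ^ j) c = algebraMap k _ β) :
    CyclicAlgebra σ β →ₐ[k] Module.End F (F ⊗[k] L) :=
  lift (((Algebra.lmul F (F ⊗[k] L)).restrictScalars k).comp Algebra.TensorProduct.includeRight)
    (twistedMul σ c) (fun l ↦ LinearMap.ext fun x ↦ by simp [mul_left_comm])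
    (LinearMap.ext fun x ↦ by
      rw [twistedMul_pow_apply, hc, pow_orderOf_eq_one, map_one, AlgHom.one_apply,
        ← Algebra.smul_def, Module.algebraMap_end_apply])

/-- The expansion `∑ i, x i * u ^ i` with coefficients in `L`, for `0 ≤ i < orderOf σ`. -/
noncomputable def expansion : (Fin (orderOf σ) → L) →ₗ[k] CyclicAlgebra σ β :=
  ∑ i : Fin (orderOf σ),
    LinearMap.mulRight k (gen σ β ^ (i : ℕ)) ∘ₗ (ofField σ β).toLinearMap ∘ₗ LinearMap.proj i

theorem expansion_apply (x : Fin (orderOf σ) → L) :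
    expansion σ β x = ∑ i, ofField σ β (x i) * gen σ β ^ (i : ℕ) := by
  simp [expansion]

variable [FiniteDimensional k L]

instance nontrivial : Nontrivial (CyclicAlgebra σ β) := by
  -- Over an algebraic closure `β` is an `orderOf σ`-th power, so a representation exists.
  obtain ⟨r, hr⟩ := IsAlgClosed.exists_pow_nat_eq (algebraMap k (AlgebraicClosure k) β)
    (orderOf_pos σ)
  have hprod : ∏ j ∈ Finset.range (orderOf σ), baseChangeAut (AlgebraicClosure k) (σ ^ j) (r ⊗ₜ 1) =
      algebraMap k (AlgebraicClosure k ⊗[k] L) β := by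
    simp only [baseChangeAut_tmul, map_one, Finset.prod_const, Finset.card_range,
      Algebra.TensorProduct.tmul_pow, one_pow, hr, Algebra.TensorProduct.algebraMap_apply]
  exact (twistedRep _ hprod).toRingHom.domain_nontrivial

theorem ofField_mul_gen_pow_mem_range (l : L) (i : ℕ) :
    ofField σ β l * gen σ β ^ i ∈ LinearMap.range (expansion σ β) := by
  refine ⟨Pi.single ⟨i % orderOf σ, Nat.mod_lt i (orderOf_pos σ)⟩
    (β ^ (i / orderOf σ) • l), ?_⟩
  rw [expansion_apply, Fintype.sum_eq_single ⟨i % orderOf σ, Nat.mod_lt i (orderOf_pos σ)⟩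
    fun j hj ↦ by rw [Pi.single_eq_of_ne hj, map_zero, zero_mul], Pi.single_eq_same]
  conv_rhs => rw [← Nat.div_add_mod i (orderOf σ), pow_add, pow_mul, gen_pow_orderOf, ← map_pow]
  rw [map_smul, Algebra.smul_def, ← mul_assoc, Algebra.commutes]

theorem expansion_surjective : Function.Surjective (expansion σ β) := by
  have hmul (a : CyclicAlgebra σ β) (w) (hw : w ∈ LinearMap.range (expansion σ β)) :
      a * w ∈ LinearMap.range (expansion σ β) := by
    induction (adjoin_eq_top σ β ▸ Algebra.mem_top : a ∈ Algebra.adjoin k _) using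
      Algebra.adjoin_induction generalizing w with
    | mem a ha =>
      obtain ⟨x, rfl⟩ := hw
      rw [expansion_apply, Finset.mul_sum]
      refine sum_mem fun i _ ↦ ?_
      obtain rfl | ⟨l, rfl⟩ := ha
      · rw [← mul_assoc, gen_mul_ofField, mul_assoc, ← pow_succ']
        exact ofField_mul_gen_pow_mem_range ..
      · rw [← mul_assoc, ← map_mul]
        exact ofField_mul_gen_pow_mem_range ..
    | algebraMap r => rw [← Algebra.smul_def]; exact Submodule.smul_mem _ r hw
    | add a b _ _ ha hb => rw [add_mul]; exact add_mem (ha w hw) (hb w hw)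
    | mul a b _ _ ha hb => rw [mul_assoc]; exact ha _ (hb w hw)
  intro a
  simpa using hmul a 1 (by simpa using ofField_mul_gen_pow_mem_range σ β 1 0)

variable {β}

theorem isUnit_map_gen {B : Type*} [Ring B] (f : CyclicAlgebra σ β →+* B) (hβ : β ≠ 0) :
    IsUnit (f (gen σ β)) := by
  refine ((isUnit_pow_iff (orderOf_pos σ).ne').1 ?_).map f
  rw [gen_pow_orderOf]
  exact hβ.isUnit.map _

theorem map_expansion_injective (hβ : β ≠ 0) {B : Type*} [Ring B] [Nontrivial B]
    (f : CyclicAlgebra σ β →+* B) : Function.Injective fun x ↦ f (expansion σ β x) := by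
  refine (injective_iff_map_eq_zero
    (f.toAddMonoidHom.comp (expansion σ β).toAddMonoidHom)).2 fun x hx ↦ ?_
  refine eq_zero_of_sum_mul_pow_eq_zero (σ := σ) (ι := f.comp (ofField σ β).toRingHom)
    (u := f (gen σ β)) (fun l ↦ ?_) (isUnit_map_gen σ f hβ) ?_
  · exact (map_mul f _ _).symm.trans ((congrArg f (gen_mul_ofField σ β l)).trans (map_mul f _ _))
  · rw [← hx]
    simp [expansion_apply]

theorem expansion_bijective (hβ : β ≠ 0) : Function.Bijective (expansion σ β) :=
  ⟨map_expansion_injective σ hβ (RingHom.id _), expansion_surjective σ β⟩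

theorem isSimpleRing (hβ : β ≠ 0) : IsSimpleRing (CyclicAlgebra σ β) :=
  isSimpleRing_of_forall_injective fun _ _ _ f a b hab ↦ by
    obtain ⟨x, rfl⟩ := expansion_surjective σ β a
    obtain ⟨y, rfl⟩ := expansion_surjective σ β b
    rw [map_expansion_injective σ hβ f hab]

theorem finrank_eq_orderOf_mul (hβ : β ≠ 0) :
    Module.finrank k (CyclicAlgebra σ β) = orderOf σ * Module.finrank k L := by
  rw [← (LinearEquiv.ofBijective _ (expansion_bijective σ hβ)).finrank_eq,
    Module.finrank_pi_fintype, Finset.sum_const, Finset.card_univ, Fintype.card_fin, smul_eq_mul]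

instance : FiniteDimensional k (CyclicAlgebra σ β) :=
  .of_surjective _ (expansion_surjective σ β)

theorem mem_range_ofField_of_commute (hβ : β ≠ 0) {a : CyclicAlgebra σ β}
    (ha : ∀ l, Commute a (ofField σ β l)) : a ∈ (ofField σ β).range := by
  obtain ⟨x, rfl⟩ := expansion_surjective σ β a
  have hx (i : Fin (orderOf σ)) (hi : (i : ℕ) ≠ 0) : x i = 0 := by
    obtain ⟨l, hl⟩ : ∃ l, (σ ^ (i : ℕ)) l ≠ l := by
      by_contra! h
      exact pow_ne_one_of_lt_orderOf hi i.2 (AlgEquiv.ext h)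
    have hzero : expansion σ β (fun j ↦ ((σ ^ (j : ℕ)) l - l) * x j) = 0 := by
      rw [← sub_eq_zero.2 (ha l).eq, expansion_apply, expansion_apply, Finset.sum_mul,
        Finset.mul_sum, ← Finset.sum_sub_distrib]
      refine Finset.sum_congr rfl fun j _ ↦ ?_
      rw [mul_assoc, gen_pow_mul_ofField, ← mul_assoc, ← mul_assoc, ← map_mul, ← map_mul,
        ← sub_mul, ← map_sub, sub_mul, mul_comm (x j)]
    have := congrFun ((expansion_bijective σ hβ).1 (hzero.trans (map_zero _).symm)) i
    exact (mul_eq_zero.1 this).resolve_left (sub_ne_zero.2 hl)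
  refine ⟨x ⟨0, orderOf_pos σ⟩, ?_⟩
  rw [expansion_apply, Fintype.sum_eq_single ⟨0, orderOf_pos σ⟩ fun i hi ↦ by
    rw [hx i (by simpa [Fin.ext_iff] using hi), map_zero, zero_mul]]
  simp

theorem isCentral [IsGalois k L] (hσ : ∀ τ, τ ∈ Subgroup.zpowers σ) (hβ : β ≠ 0) :
    Algebra.IsCentral k (CyclicAlgebra σ β) where
  out z hz := by
    rw [Subalgebra.mem_center_iff] at hz
    obtain ⟨l, rfl⟩ := mem_range_ofField_of_commute σ hβ fun l ↦ (hz (ofField σ β l)).symm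
    have hfix : σ l = l := by
      refine (ofField σ β).toRingHom.injective
        ((isUnit_map_gen σ (RingHom.id _) hβ).mul_right_cancel ?_)
      exact (gen_mul_ofField σ β l).symm.trans (hz (gen σ β))
    obtain ⟨r, rfl⟩ := (IsGalois.mem_range_algebraMap_iff_fixed l).2 fun τ ↦ by
      obtain ⟨i, rfl⟩ := hσ τ
      exact zpow_mem (show σ ∈ MulAction.stabilizer (L ≃ₐ[k] L) l from hfix) i
    exact Algebra.mem_bot.2 ⟨r, ((ofField σ β).commutes r).symm⟩

end CyclicAlgebra
end CyclicAlgebra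

section NormEquation

theorem algebraMap_norm_eq_prod_of_isUnit_det {F R ι : Type*} [CommRing F] [CommRing R]
    [Algebra F R] [Fintype ι] [DecidableEq ι] (b : Module.Basis ι F R) (τ : ι → R →ₐ[F] R)
    (hdet : IsUnit (Matrix.of fun i j ↦ τ i (b j)).det) (c : R) :
    algebraMap F R (Algebra.norm F c) = ∏ i, τ i c := by
  set P : Matrix ι ι R := Matrix.of fun i j ↦ τ i (b j)
  have h : P * (algebraMap F R).mapMatrix (Algebra.leftMulMatrix b c) =
      Matrix.diagonal (fun i ↦ τ i c) * P := by
    ext i j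
    rw [Matrix.diagonal_mul, Matrix.mul_apply]
    calc _ = τ i (∑ l, b.repr (c * b j) l • b l) := by
          simp [P, Algebra.leftMulMatrix_eq_repr_mul, Algebra.smul_def, mul_comm]
      _ = _ := by rw [b.sum_repr, map_mul]; rfl
  have hd := congrArg Matrix.det h
  rw [Matrix.det_mul, Matrix.det_mul, Matrix.det_diagonal, mul_comm, ← RingHom.map_det] at hd
  rw [Algebra.norm_eq_matrix_det b]
  exact hdet.mul_right_cancel hd

variable {k L F : Type*} [Field k] [Field L] [Algebra k L] [FiniteDimensional k L]

theorem isUnit_det_algEquiv_apply_basis [DecidableEq (L ≃ₐ[k] L)]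
    (b : Module.Basis (L ≃ₐ[k] L) k L) :
    IsUnit (Matrix.of fun τ μ : L ≃ₐ[k] L ↦ τ (b μ)).det := by
  rw [← Matrix.isUnit_iff_isUnit_det, ← Matrix.linearIndependent_rows_iff_isUnit,
    Fintype.linearIndependent_iff]
  intro g hg
  have hli := Fintype.linearIndependent_iff.1 ((linearIndependent_toLinearMap k L L).comp
    (fun τ : L ≃ₐ[k] L ↦ (τ : L →ₐ[k] L)) fun _ _ h ↦ AlgEquiv.coe_toAlgHom_injective h)
  refine hli g (b.ext fun μ ↦ ?_)
  simpa using congrFun hg μ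

variable [IsGalois k L] [Field F] [Algebra k F]

theorem algebraMap_norm_baseChange (c : F ⊗[k] L) :
    algebraMap F (F ⊗[k] L) (Algebra.norm F c) = ∏ τ : L ≃ₐ[k] L, baseChangeAut F τ c := by
  classical
  let b := IsGalois.normalBasis k L
  refine algebraMap_norm_eq_prod_of_isUnit_det (Algebra.TensorProduct.basis F b) _ ?_ c
  convert (isUnit_det_algEquiv_apply_basis b).map
    (Algebra.TensorProduct.includeRight : L →ₐ[k] F ⊗[k] L)
  rw [AlgHom.map_det]
  congr 1
  ext τ μ
  simp

theorem prod_range_orderOf_eq_algebraMap_norm {σ : L ≃ₐ[k] L}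
    (hσ : ∀ τ, τ ∈ Subgroup.zpowers σ) (c : F ⊗[k] L) :
    ∏ j ∈ Finset.range (orderOf σ), baseChangeAut F (σ ^ j) c =
      algebraMap F (F ⊗[k] L) (Algebra.norm F c) := by
  classical
  rw [algebraMap_norm_baseChange, ← IsCyclic.image_range_orderOf hσ, Finset.prod_image]
  simpa using pow_injOn_Iio_orderOf

end NormEquation

section CyclicVector

theorem exists_forall_aeval_apply_eq_zero_imp {F V : Type*} [Field F] [AddCommGroup V]
    [Module F V] [FiniteDimensional F V] (g : Module.End F V) :
    ∃ v, ∀ p : Polynomial F, Polynomial.aeval g p v = 0 → Polynomial.aeval g p = 0 := by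
  obtain ⟨x, hx⟩ :=
    Module.exists_ker_toSpanSingleton_eq_annihilator (Polynomial F) (Module.AEval' g)
  obtain ⟨v, rfl⟩ := (Module.AEval'.of g).surjective x
  refine ⟨v, fun p hpv ↦ LinearMap.ext fun w ↦ ?_⟩
  have hp : p ∈ Module.annihilator (Polynomial F) (Module.AEval' g) := by
    rw [← hx, LinearMap.mem_ker, LinearMap.toSpanSingleton_apply, ← Module.AEval.of_aeval_smul,
      Module.End.smul_def, hpv, map_zero]
  refine (Module.AEval'.of g).injective ?_
  simpa [← Module.AEval.of_aeval_smul] using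
    Module.mem_annihilator.1 hp (Module.AEval'.of g w)

theorem exists_injective_apply_of_adjoin_eq_top {F R V : Type*} [Field F] [CommRing R]
    [Algebra F R] [AddCommGroup V] [Module F V] [FiniteDimensional F V] {θ : R}
    (hθ : Algebra.adjoin F {θ} = ⊤) {Φ : R →ₐ[F] Module.End F V} (hΦ : Function.Injective Φ) :
    ∃ v, Function.Injective fun r ↦ Φ r v := by
  obtain ⟨v, hv⟩ := exists_forall_aeval_apply_eq_zero_imp (Φ θ)
  refine ⟨v, (injective_iff_map_eq_zero (LinearMap.applyₗ v ∘ₗ Φ.toLinearMap)).2 fun r hr ↦ ?_⟩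
  obtain ⟨p, hp⟩ : ∃ p : Polynomial F, Polynomial.aeval θ p = r := by
    rw [← AlgHom.mem_range, ← Algebra.adjoin_singleton_eq_range_aeval, hθ]
    exact Algebra.mem_top
  have hΦp : Φ r = Polynomial.aeval (Φ θ) p := by rw [← hp, Polynomial.aeval_algHom_apply]
  refine (injective_iff_map_eq_zero Φ).1 hΦ r (hΦp.trans (hv p ?_))
  rw [← hΦp]
  exact hr

theorem exists_adjoin_singleton_baseChange_eq_top (k L F : Type*) [Field k] [Field L] [Algebra k L]
    [FiniteDimensional k L] [Algebra.IsSeparable k L] [CommRing F] [Algebra k F] :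
    ∃ θ : F ⊗[k] L, Algebra.adjoin F {θ} = ⊤ := by
  obtain ⟨α, hα⟩ := Field.exists_primitive_element k L
  refine ⟨1 ⊗ₜ α, ?_⟩
  have h : Algebra.adjoin k {α} = ⊤ := by
    rw [← IntermediateField.adjoin_simple_toSubalgebra_of_isAlgebraic (.of_finite k α), hα,
      IntermediateField.top_toSubalgebra]
  simpa using Algebra.TensorProduct.adjoin_one_tmul_image_eq_top {α} h

end CyclicVector

section SplittingCriterion

theorem injective_liftEquiv_comp {k A F L V : Type*} [Field k] [Ring A] [Algebra k A]
    [Algebra.IsCentral k A] [IsSimpleRing A] [FiniteDimensional k A] [Field F] [Algebra k F]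
    [Ring L] [Algebra k L] [AddCommGroup V] [Module k V] [Module F V] [IsScalarTower k F V]
    [Nontrivial V] (ρ : A →ₐ[k] Module.End F V) {ι : L →ₐ[k] A} (hι : Function.Injective ι) :
    Function.Injective (AlgHom.liftEquiv k F L (Module.End F V) (ρ.comp ι)) := by
  have h : AlgHom.liftEquiv k F L (Module.End F V) (ρ.comp ι) =
      (AlgHom.liftEquiv k F A (Module.End F V) ρ).comp (Algebra.TensorProduct.map (.id F F) ι) := by
    ext; simp
  rw [h]
  exact (RingHom.injective (AlgHom.liftEquiv k F A (Module.End F V) ρ).toRingHom).comp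
    (Module.Flat.lTensor_preserves_injective_linearMap ι.toLinearMap hι)

theorem pow_apply_eq_prod_apply {k L F V : Type*} [Field k] [Field L] [Algebra k L] [CommRing F]
    [Algebra k F] [AddCommGroup V] [Module F V] {σ : L ≃ₐ[k] L}
    {Φ : F ⊗[k] L →ₐ[F] Module.End F V} {u : Module.End F V}
    (hu : ∀ x, u * Φ x = Φ (baseChangeAut F σ x) * u) {c : F ⊗[k] L} {v : V} (hc : u v = Φ c v)
    (i : ℕ) : (u ^ i) v = Φ (∏ j ∈ Finset.range i, baseChangeAut F (σ ^ j) c) v := by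
  induction i with
  | zero => simp
  | succ i ih =>
    have hstep : baseChangeAut F σ (∏ j ∈ Finset.range i, baseChangeAut F (σ ^ j) c) * c =
        ∏ j ∈ Finset.range (i + 1), baseChangeAut F (σ ^ j) c := by
      simp only [Finset.prod_range_succ', map_prod, pow_succ', map_mul, AlgHom.mul_apply, pow_zero,
        map_one, AlgHom.one_apply]
    rw [pow_succ', Module.End.mul_apply, ih, ← Module.End.mul_apply, hu, Module.End.mul_apply, hc,
      ← Module.End.mul_apply, ← map_mul, hstep]

variable {k L F : Type*} [Field k] [Field L] [Algebra k L] [FiniteDimensional k L] [IsGalois k L]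
  [Field F] [Algebra k F] {σ : L ≃ₐ[k] L} {β : k}

theorem exists_prod_eq_of_algHom (hσ : ∀ τ, τ ∈ Subgroup.zpowers σ) (hβ : β ≠ 0) {V : Type*}
    [AddCommGroup V] [Module k V] [Module F V] [IsScalarTower k F V]
    (ρ : CyclicAlgebra σ β →ₐ[k] Module.End F V) (hV : Module.finrank F V = Module.finrank k L) :
    ∃ c : F ⊗[k] L,
      ∏ j ∈ Finset.range (orderOf σ), baseChangeAut F (σ ^ j) c = algebraMap k _ β := by
  have hpos : 0 < Module.finrank F V := hV ▸ Module.finrank_pos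
  have : FiniteDimensional F V := .of_finrank_pos hpos
  have : Nontrivial V := Module.nontrivial_of_finrank_pos hpos
  have := CyclicAlgebra.isSimpleRing σ hβ
  have := CyclicAlgebra.isCentral σ hσ hβ
  let Φ : F ⊗[k] L →ₐ[F] Module.End F V :=
    AlgHom.liftEquiv k F L _ (ρ.comp (CyclicAlgebra.ofField σ β))
  have hΦ : Function.Injective Φ :=
    injective_liftEquiv_comp ρ (CyclicAlgebra.ofField σ β).toRingHom.injective
  have hu (x : F ⊗[k] L) : ρ (CyclicAlgebra.gen σ β) * Φ x =
      Φ (baseChangeAut F σ x) * ρ (CyclicAlgebra.gen σ β) := by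
    induction x with
    | zero => simp
    | add x y hx hy => simp only [mul_add, add_mul, map_add, hx, hy]
    | tmul f l =>
      have hl := congrArg ρ (CyclicAlgebra.gen_mul_ofField σ β l)
      rw [map_mul, map_mul] at hl
      simp [Φ, hl]
  obtain ⟨θ, hθ⟩ := exists_adjoin_singleton_baseChange_eq_top k L F
  obtain ⟨v, hv⟩ := exists_injective_apply_of_adjoin_eq_top hθ hΦ
  obtain ⟨c, hc⟩ : ∃ c, Φ c v = ρ (CyclicAlgebra.gen σ β) v :=
    (LinearMap.injective_iff_surjective_of_finrank_eq_finrank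
      (f := LinearMap.applyₗ v ∘ₗ Φ.toLinearMap)
      ((Module.finrank_baseChange).trans hV.symm)).1 hv _
  refine ⟨c, hv ?_⟩
  have hcomm : Φ (algebraMap k (F ⊗[k] L) β) = algebraMap k (Module.End F V) β :=
    (Φ.restrictScalars k).commutes β
  simp only [← pow_apply_eq_prod_apply hu hc.symm, ← map_pow, CyclicAlgebra.gen_pow_orderOf,
    AlgHom.commutes, hcomm]

theorem CyclicAlgebra.finrank_eq_sq (hσ : ∀ τ, τ ∈ Subgroup.zpowers σ) (hβ : β ≠ 0) :
    Module.finrank k (CyclicAlgebra σ β) = Module.finrank k L ^ 2 := by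
  rw [CyclicAlgebra.finrank_eq_orderOf_mul σ hβ, orderOf_eq_card_of_forall_mem_zpowers hσ,
    IsGalois.card_aut_eq_finrank, sq]

theorem splitsOver_iff_exists_prod_eq (hσ : ∀ τ, τ ∈ Subgroup.zpowers σ) (hβ : β ≠ 0) :
    SplitsOver k (CyclicAlgebra σ β) F ↔ ∃ c : F ⊗[k] L,
      ∏ j ∈ Finset.range (orderOf σ), baseChangeAut F (σ ^ j) c = algebraMap k _ β := by
  have := CyclicAlgebra.isSimpleRing σ hβ
  have := CyclicAlgebra.isCentral σ hσ hβ
  have hdim := CyclicAlgebra.finrank_eq_sq hσ hβ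
  constructor
  · intro h
    obtain ⟨ρ⟩ := h.exists_algHom hdim
    exact exists_prod_eq_of_algHom hσ hβ ρ (Module.finrank_fin_fun F)
  · rintro ⟨c, hc⟩
    exact .of_algHom (CyclicAlgebra.twistedRep c hc) (by rw [hdim, Module.finrank_baseChange])

end SplittingCriterion

section BaseNorm

variable {k L F : Type} [Field k] [Field L] [Algebra k L] [FiniteDimensional k L] [IsGalois k L]
  [Field F] [Algebra k F] {σ : L ≃ₐ[k] L} {β : k}

theorem isBaseNorm_iff_exists_prod_eq (hσ : ∀ τ, τ ∈ Subgroup.zpowers σ) (hβ : β ≠ 0) :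
    IsBaseNorm k L F β ↔ ∃ c : F ⊗[k] L,
      ∏ j ∈ Finset.range (orderOf σ), baseChangeAut F (σ ^ j) c = algebraMap k _ β := by
  let : Algebra F (L ⊗[k] F) := Algebra.TensorProduct.rightAlgebra
  let e : F ⊗[k] L ≃ₐ[F] L ⊗[k] F := Algebra.TensorProduct.commRight k F L
  have hnorm (c : F ⊗[k] L) : Algebra.norm F (e c) = algebraMap k F β ↔
      ∏ j ∈ Finset.range (orderOf σ), baseChangeAut F (σ ^ j) c = algebraMap k _ β := by
    rw [prod_range_orderOf_eq_algebraMap_norm hσ, Algebra.norm_eq_of_algEquiv,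
      IsScalarTower.algebraMap_apply k F (F ⊗[k] L),
      (algebraMap F (F ⊗[k] L)).injective.eq_iff]
  constructor
  · rintro ⟨x, hx⟩
    exact ⟨e.symm x, (hnorm _).1 (by rwa [e.apply_symm_apply])⟩
  · rintro ⟨c, hc⟩
    have hu : IsUnit c := by
      refine isUnit_of_dvd_unit ?_ (hc ▸ hβ.isUnit.map (algebraMap k (F ⊗[k] L)))
      simpa using Finset.dvd_prod_of_mem (fun j ↦ baseChangeAut F (σ ^ j) c)
        (Finset.mem_range.2 (orderOf_pos σ))
    exact ⟨(hu.map e).unit, (hnorm c).2 hc⟩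

theorem isBaseNorm_iff_splitsOver (hσ : ∀ τ, τ ∈ Subgroup.zpowers σ) (hβ : β ≠ 0) :
    IsBaseNorm k L F β ↔ SplitsOver k (CyclicAlgebra σ β) F :=
  (isBaseNorm_iff_exists_prod_eq hσ hβ).trans (splitsOver_iff_exists_prod_eq hσ hβ).symm

end BaseNorm

theorem stmt12_general (k L : Type) [Field k] [Field L] [Algebra k L]
    [FiniteDimensional k L] [IsGalois k L] [IsCyclic (L ≃ₐ[k] L)]
    (β : kˣ) :
    ∃ (F : Type) (_ : Field F) (_ : Algebra k F),
      FiniteDimensional k F ∧ Algebra.IsSeparable k F ∧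
      IsBaseNorm k L F (β : k) ∧
      ∀ (F' : Type) (_ : Field F') (_ : Algebra k F'),
        FiniteDimensional k F' → IsBaseNorm k L F' (β : k) →
        Module.finrank k F ∣ Module.finrank k F' := by
  obtain ⟨σ, hσ⟩ := IsCyclic.exists_generator (α := L ≃ₐ[k] L)
  have := CyclicAlgebra.isSimpleRing σ β.ne_zero
  have := CyclicAlgebra.isCentral σ hσ β.ne_zero
  simp only [isBaseNorm_iff_splitsOver hσ β.ne_zero]
  exact exists_separable_splitsOver_finrank_dvd (CyclicAlgebra.finrank_eq_sq hσ β.ne_zero)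

theorem stmt12 (k L : Type) [Field k] [Field L] [Algebra k L]
    [FiniteDimensional k L] [IsGalois k L] [IsCyclic (L ≃ₐ[k] L)]
    (β : kˣ) :
    ∃ (F : Type) (_ : Field F) (_ : Algebra k F),
      FiniteDimensional k F ∧ Algebra.IsSeparable k F ∧
      IsBaseNorm k L F (β : k) ∧
      ∀ (F' : Type) (_ : Field F') (_ : Algebra k F'),
        FiniteDimensional k F' → Algebra.IsSeparable k F' →
        IsBaseNorm k L F' (β : k) →
        Module.finrank k F ∣ Module.finrank k F' := by
  obtain ⟨F, _, _, hfin, hsep, hF, hdvd⟩ := stmt12_general k L β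
  exact ⟨F, _, _, hfin, hsep, hF, fun F' _ _ hfin' _ hF' ↦ hdvd F' _ _ hfin' hF'⟩
end
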